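/- Let G be a cyclically 4-edge-connected cubic simple graph containing no cycle of length 3 or 4, and let v1v2v3v4v5 be a 5-cycle in G with ui the third neighbor of vi outside the cycle for each i; assume u1, ..., u5 are pairwise distinct and none of them lies on the cycle. For each i ∈ {1, ..., 5} (indices modulo 5) let G_i be the graph obtained from G by deleting v1, ..., v5, adding a new vertex w adjacent to u_{i+2}, u_{i+3} and u_{i+4}, and adding the edge u_i u_{i+1}. Then ν(G) ≥ (5/2) · min_{1 ≤ i ≤ 5} ν(G_i). -/

import Mathlib

namespace CiDC

open SimpleGraph

/-- A circuit in a graph: a connected 2-regular subgraph. -/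
def IsCircuit {V : Type*} {G : SimpleGraph V} (H : G.Subgraph) : Prop :=
  H.Connected ∧ ∀ v ∈ H.verts, (H.neighborSet v).ncard = 2

open scoped Classical in
/-- A circuit double cover: a multiset of circuits covering every edge exactly twice
(counted with multiplicity). -/
def IsCiDC {V : Type*} (G : SimpleGraph V) (C : Multiset G.Subgraph) : Prop :=
  (∀ H ∈ C, IsCircuit H) ∧ ∀ e ∈ G.edgeSet, C.countP (fun H => e ∈ H.edgeSet) = 2

/-- ν(G): the number of circuit double covers of `G`. -/
noncomputable def nu {V : Type*} (G : SimpleGraph V) : ℕ :=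
  {C : Multiset G.Subgraph | IsCiDC G C}.ncard

/-- A cubic graph: every vertex has degree 3. -/
def IsCubic {V : Type*} (G : SimpleGraph V) : Prop :=
  ∀ v : V, (G.neighborSet v).ncard = 3



/-- The set of edges of `G` between `S` and its complement. -/
def edgeCutOf {V : Type*} (G : SimpleGraph V) (S : Set V) : Set (Sym2 V) :=
  {e | ∃ u v : V, e = s(u, v) ∧ G.Adj u v ∧ u ∈ S ∧ v ∉ S}

/-- An edge cut: a nonempty set of edges of the form `E(S, V \ S)`. -/
def IsEdgeCut {V : Type*} (G : SimpleGraph V) (F : Set (Sym2 V)) : Prop :=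
  F.Nonempty ∧ ∃ S : Set V, F = edgeCutOf G S

/-- A set of edges is circuit-separating if after its removal at least two of the
resulting components contain a circuit. -/
def CircuitSeparating {V : Type*} (G : SimpleGraph V) (F : Set (Sym2 V)) : Prop :=
  ∃ H₁ H₂ : (G.deleteEdges F).Subgraph,
    IsCircuit H₁ ∧ IsCircuit H₂ ∧
      ∃ x ∈ H₁.verts, ∃ y ∈ H₂.verts, ¬ (G.deleteEdges F).Reachable x y

/-- Cyclically 4-edge-connected: every circuit-separating edge cut has size at least 4. -/
def CyclicallyFourEdgeConnected {V : Type*} (G : SimpleGraph V) : Prop :=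
  ∀ F : Set (Sym2 V), IsEdgeCut G F → CircuitSeparating G F → 4 ≤ F.ncard

/-- 2-edge-connected: connected and bridgeless. -/
def TwoEdgeConnected {V : Type*} (G : SimpleGraph V) : Prop :=
  G.Connected ∧ ∀ e : Sym2 V, ¬ G.IsBridge e

/-- 3-edge-connected: connected, and still connected after deleting any ≤ 2 edges. -/
def ThreeEdgeConnected {V : Type*} (G : SimpleGraph V) : Prop :=
  G.Connected ∧ ∀ F : Set (Sym2 V), F.ncard ≤ 2 → (G.deleteEdges F).Connected

/-!
In a cubic graph, a circuit passes through a vertex along two of its three edges, hence at a corner,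
which we name by the edge it avoids. Every corner is used exactly once by a circuit double cover, so
a circuit double cover amounts to a matching across every edge between the two corners at either
end (a transition system), such that no circuit passes twice through the same vertex.

Fix the part `B` of a transition system outside the pentagon. The ten corners of `B` at the five
edges `v j - u j` are joined in pairs by five paths, and the pairing is encoded by a derangement
`π`. The covers of `G` extending `B`, and likewise those of each reduction `G_i`, are the ways to
join these paths through the pentagon, respectively through the new vertex and the new edge, where
two paths may share a circuit only if they do not meet in a vertex outside the pentagon. For each of
the 44 derangements there are finitely many ways of joining, and each requires the compatibility
of some set of pairs of paths. Whatever the compatible pairs are, the joinings of the five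
reductions that they allow are together at most twice as many as the joinings of the pentagon
that they allow; this finite inequality is checked by computation. Summing over `B` gives
`∑ i, ν(G_i) ≤ 2 ν(G)`.
-/

section TransitionSystems

variable {V : Type*} {H : SimpleGraph V} {M : SimpleGraph (V × V)} {S : Set V}

/-- The corners of a cubic graph `H` are the pairs of distinct edges with a common end. The corner
at `x` that avoids the third edge `xa` is encoded as the pair `(x, a)`. Two corners at adjacent
vertices `x`, `y` are adjacent in `cornerGraph H` if both of them use the edge `xy`. -/
def cornerGraph (H : SimpleGraph V) : SimpleGraph (V × V) where
  Adj p q := H.Adj p.1 q.1 ∧ (H.Adj p.1 p.2 ∧ p.2 ≠ q.1) ∧ H.Adj q.1 q.2 ∧ q.2 ≠ p.1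
  symm := ⟨fun _ _ h => ⟨h.1.symm, h.2.2, h.2.1⟩⟩
  loopless := ⟨fun _ h => h.1.ne rfl⟩

/-- A transition system of `H` on `S`: across each edge inside `S`, every corner using that edge
is linked to a corner at the other end, and no component contains two corners of one vertex. The
components of a transition system on all of `V` are the circuits of a circuit double cover. -/
structure IsTransitionSystemOn (H : SimpleGraph V) (S : Set V) (M : SimpleGraph (V × V)) :
    Prop where
  le_cornerGraph : M ≤ cornerGraph H
  mem_of_adj : ∀ {p q}, M.Adj p q → p.1 ∈ S
  exists_adj : ∀ {x y a}, x ∈ S → y ∈ S → H.Adj x y → H.Adj x a → a ≠ y →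
    ∃ b, M.Adj (x, a) (y, b)
  eq_of_reachable : ∀ {x a b}, M.Reachable (x, a) (x, b) → a = b

/-- A transition system on the whole vertex set. -/
abbrev IsTransitionSystem (H : SimpleGraph V) (M : SimpleGraph (V × V)) : Prop :=
  IsTransitionSystemOn H Set.univ M

/-- The circuit `K` uses the corner `p`. -/
def UsesCorner (K : H.Subgraph) (p : V × V) : Prop :=
  p.1 ∈ K.verts ∧ H.Adj p.1 p.2 ∧ ¬ K.Adj p.1 p.2

/-- The links between corners that lie on a common member of `C` and share an edge. -/
def cornerLinks (C : Multiset H.Subgraph) : SimpleGraph (V × V) where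
  Adj p q := (cornerGraph H).Adj p q ∧ ∃ K ∈ C, UsesCorner K p ∧ UsesCorner K q
  symm := ⟨fun _ _ ⟨h, K, hK, hp, hq⟩ => ⟨h.symm, K, hK, hq, hp⟩⟩
  loopless := ⟨fun _ h => h.1.ne rfl⟩

theorem exists_eq_insert_pair_of_ncard_eq_three {α : Type*} {s : Set α} (hs : s.ncard = 3)
    {a : α} (ha : a ∈ s) : ∃ b c, a ≠ b ∧ a ≠ c ∧ b ≠ c ∧ s = {a, b, c} := by
  obtain ⟨x, y, z, hxy, hxz, hyz, rfl⟩ := Set.ncard_eq_three.1 hs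
  rcases ha with rfl | rfl | rfl
  · exact ⟨y, z, hxy, hxz, hyz, rfl⟩
  · exact ⟨x, z, hxy.symm, hyz, hxz, Set.insert_comm _ _ _⟩
  · exact ⟨x, y, hxz.symm, hyz.symm, hxy, by rw [Set.insert_comm a, Set.pair_comm a]⟩

theorem reachable_iff_of_forall_adj {α : Type*} {Γ : SimpleGraph α} {P : α → Prop}
    (h : ∀ {p q}, Γ.Adj p q → P p → P q) {p q : α} (hpq : Γ.Reachable p q) : P p ↔ P q := by
  obtain ⟨w⟩ := hpq
  induction w with
  | nil => rfl
  | cons hadj _ ih => exact ⟨fun hp => ih.1 (h hadj hp), fun hq => h hadj.symm (ih.2 hq)⟩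

namespace IsTransitionSystemOn

theorem eq_of_adj_adj (hM : IsTransitionSystemOn H S M) {p : V × V} {y b c : V}
    (hb : M.Adj p (y, b)) (hc : M.Adj p (y, c)) : b = c :=
  hM.eq_of_reachable (hb.symm.reachable.trans hc.reachable)

theorem isCorner_iff_of_reachable (hM : IsTransitionSystemOn H S M) {p q : V × V}
    (h : M.Reachable p q) : H.Adj p.1 p.2 ↔ H.Adj q.1 q.2 :=
  reachable_iff_of_forall_adj (P := fun p => H.Adj p.1 p.2)
    (fun hadj _ => (hM.le_cornerGraph hadj).2.2.1) h

theorem mem_iff_of_reachable (hM : IsTransitionSystemOn H S M) {p q : V × V}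
    (h : M.Reachable p q) : p.1 ∈ S ↔ q.1 ∈ S :=
  reachable_iff_of_forall_adj (P := fun p => p.1 ∈ S)
    (fun hadj _ => hM.mem_of_adj hadj.symm) h

end IsTransitionSystemOn

section CircuitDoubleCovers

variable {C D : Multiset H.Subgraph} {K L : H.Subgraph} {p q : V × V} {x y a b c : V}

theorem IsCircuit.existsUnique_usesCorner (hH : IsCubic H) (hK : IsCircuit K)
    (hx : x ∈ K.verts) : ∃! a, UsesCorner K (x, a) := by
  have hfin : (K.neighborSet x).Finite := Set.finite_of_ncard_ne_zero (by simp [hK.2 x hx])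
  obtain ⟨a, ha⟩ : ∃ a, H.neighborSet x \ K.neighborSet x = {a} := by
    rw [← Set.ncard_eq_one, Set.ncard_sdiff (K.neighborSet_subset x) hfin, hH x, hK.2 x hx]
  have mem_iff : ∀ b, UsesCorner K (x, b) ↔ b = a := fun b => by
    rw [← Set.mem_singleton_iff, ← ha]
    exact ⟨fun h => h.2, fun h => ⟨hx, h⟩⟩
  exact ⟨a, (mem_iff a).2 rfl, fun b hb => (mem_iff b).1 hb⟩

theorem IsCircuit.adj_iff_of_usesCorner (hH : IsCubic H) (hK : IsCircuit K)
    (hp : UsesCorner K (x, a)) : K.Adj x y ↔ H.Adj x y ∧ a ≠ y := by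
  refine ⟨fun h => ⟨h.adj_sub, fun hay => hp.2.2 (hay ▸ h)⟩, fun ⟨hxy, hay⟩ => ?_⟩
  by_contra h
  exact hay ((hK.existsUnique_usesCorner hH hp.1).unique hp ⟨hp.1, hxy, h⟩)

theorem IsCircuit.exists_usesCorner (hH : IsCubic H) (hK : IsCircuit K) :
    ∃ p, UsesCorner K p := by
  obtain ⟨x, hx⟩ := hK.1.nonempty
  obtain ⟨a, ha, -⟩ := hK.existsUnique_usesCorner hH hx
  exact ⟨_, ha⟩

theorem IsCircuit.le_of_usesCorner_imp (hH : IsCubic H) (hK : IsCircuit K) (hL : IsCircuit L)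
    (h : ∀ p, UsesCorner K p → UsesCorner L p) : K ≤ L := by
  constructor
  · intro x hx
    obtain ⟨a, ha, -⟩ := hK.existsUnique_usesCorner hH hx
    exact (h _ ha).1
  · intro x y hxy
    obtain ⟨a, ha, -⟩ := hK.existsUnique_usesCorner hH (K.edge_vert hxy)
    exact (hL.adj_iff_of_usesCorner hH (h _ ha)).2 ((hK.adj_iff_of_usesCorner hH ha).1 hxy)

open scoped Classical in
theorem countP_mem_edgeSet_eq_add (hH : IsCubic H) (hab : a ≠ b) (hac : a ≠ c) (hbc : b ≠ c)
    (hN : H.neighborSet x = {a, b, c}) (hC : ∀ K ∈ C, IsCircuit K) :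
    C.countP (fun K => s(x, a) ∈ K.edgeSet) =
      C.countP (fun K => UsesCorner K (x, b)) + C.countP (fun K => UsesCorner K (x, c)) := by
  have ha : H.Adj x a := by simp [← mem_neighborSet, hN]
  have mem_edgeSet_iff : ∀ K ∈ C, s(x, a) ∈ K.edgeSet ↔
      UsesCorner K (x, b) ∨ UsesCorner K (x, c) := by
    intro K hK
    rw [Subgraph.mem_edgeSet]
    constructor
    · intro h
      obtain ⟨d, hd, -⟩ := (hC K hK).existsUnique_usesCorner hH (K.edge_vert h)
      have hdN : d ∈ H.neighborSet x := hd.2.1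
      rw [hN] at hdN
      rcases hdN with rfl | rfl | rfl
      exacts [absurd h hd.2.2, .inl hd, .inr hd]
    · rintro (h | h)
      exacts [((hC K hK).adj_iff_of_usesCorner hH h).2 ⟨ha, hab.symm⟩,
        ((hC K hK).adj_iff_of_usesCorner hH h).2 ⟨ha, hac.symm⟩]
  have not_and : ∀ K ∈ C, ¬(UsesCorner K (x, b) ∧ UsesCorner K (x, c)) := fun K hK h =>
    hbc (((hC K hK).existsUnique_usesCorner hH h.1.1).unique h.1 h.2)
  simp only [Multiset.countP_eq_card_filter]
  rw [Multiset.filter_congr mem_edgeSet_iff, ← Multiset.card_add, Multiset.filter_add_filter,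
    Multiset.filter_eq_nil.2 not_and, add_zero]

open scoped Classical in
theorem IsCiDC.countP_usesCorner_eq_one (hH : IsCubic H) (hC : IsCiDC H C) (hxa : H.Adj x a) :
    C.countP (fun K => UsesCorner K (x, a)) = 1 := by
  obtain ⟨b, c, hab, hac, hbc, hN⟩ :=
    exists_eq_insert_pair_of_ncard_eq_three (hH x) (show a ∈ H.neighborSet x from hxa)
  have hxb : H.Adj x b := by simp [← mem_neighborSet, hN]
  have hxc : H.Adj x c := by simp [← mem_neighborSet, hN]
  have ea := countP_mem_edgeSet_eq_add hH hab hac hbc hN hC.1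
  have eb := countP_mem_edgeSet_eq_add hH hab.symm hbc hac (by rw [hN, Set.insert_comm]) hC.1
  have ec := countP_mem_edgeSet_eq_add hH hac.symm hbc.symm hab
    (by rw [hN, Set.pair_comm b c, Set.insert_comm]) hC.1
  rw [hC.2 _ hxa] at ea
  rw [hC.2 _ hxb] at eb
  rw [hC.2 _ hxc] at ec
  omega

theorem IsCiDC.exists_mem_usesCorner (hH : IsCubic H) (hC : IsCiDC H C) (hp : H.Adj p.1 p.2) :
    ∃ K ∈ C, UsesCorner K p := by
  classical
  exact Multiset.countP_pos.1 (hC.countP_usesCorner_eq_one hH hp ▸ one_pos)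

theorem IsCiDC.nodup (hH : IsCubic H) (hC : IsCiDC H C) : C.Nodup := by
  classical
  rw [Multiset.nodup_iff_count_le_one]
  intro K
  by_cases hK : K ∈ C
  · obtain ⟨p, hp⟩ := (hC.1 K hK).exists_usesCorner hH
    rw [← hC.countP_usesCorner_eq_one hH hp.2.1, Multiset.count, Multiset.countP_eq_card_filter,
      Multiset.countP_eq_card_filter]
    refine Multiset.card_le_card (Multiset.monotone_filter_right C ?_)
    rintro L rfl
    exact hp
  · rw [Multiset.count_eq_zero_of_notMem hK]
    exact zero_le_one

theorem IsCiDC.eq_of_usesCorner (hH : IsCubic H) (hC : IsCiDC H C) (hK : K ∈ C) (hL : L ∈ C)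
    (hKp : UsesCorner K p) (hLp : UsesCorner L p) : K = L := by
  classical
  have hcard := hC.countP_usesCorner_eq_one hH hKp.2.1
  rw [Multiset.countP_eq_card_filter, Multiset.card_eq_one] at hcard
  obtain ⟨J, hJ⟩ := hcard
  have eq_J : ∀ K' ∈ C, UsesCorner K' p → K' = J := fun K' hK' h =>
    Multiset.mem_singleton.1 (hJ ▸ Multiset.mem_filter.2 ⟨hK', h⟩)
  rw [eq_J K hK hKp, eq_J L hL hLp]

theorem IsCiDC.usesCorner_of_reachable (hH : IsCubic H) (hC : IsCiDC H C)
    (h : (cornerLinks C).Reachable p q) (hK : K ∈ C) (hp : UsesCorner K p) : UsesCorner K q := by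
  refine (reachable_iff_of_forall_adj (P := UsesCorner K) ?_ h).1 hp
  rintro r s ⟨-, L, hL, hLr, hLs⟩ hr
  rwa [hC.eq_of_usesCorner hH hK hL hr hLr]

theorem IsCiDC.isTransitionSystem_cornerLinks (hH : IsCubic H) (hC : IsCiDC H C) :
    IsTransitionSystem H (cornerLinks C) where
  le_cornerGraph _ _ h := h.1
  mem_of_adj _ := Set.mem_univ _
  exists_adj {x y a} _ _ hxy hxa hay := by
    obtain ⟨K, hK, hKa⟩ := hC.exists_mem_usesCorner hH (p := (x, a)) hxa
    have hadj := ((hC.1 K hK).adj_iff_of_usesCorner hH hKa).2 ⟨hxy, hay⟩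
    obtain ⟨b, hb, -⟩ := (hC.1 K hK).existsUnique_usesCorner hH (K.edge_vert hadj.symm)
    have hbx := ((hC.1 K hK).adj_iff_of_usesCorner hH hb).1 hadj.symm
    exact ⟨b, ⟨hxy, ⟨hxa, hay⟩, hb.2.1, hbx.2⟩, K, hK, hKa, hb⟩
  eq_of_reachable {x a b} h := by
    obtain ⟨w⟩ := h
    cases w with
    | nil => rfl
    | cons hadj w =>
      obtain ⟨K, hK, hKa, -⟩ := hadj.2
      have hKb := hC.usesCorner_of_reachable hH (hadj.reachable.trans ⟨w⟩) hK hKa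
      exact ((hC.1 K hK).existsUnique_usesCorner hH hKa.1).unique hKa hKb

theorem IsCiDC.reachable_of_usesCorner (hH : IsCubic H) (hC : IsCiDC H C) (hK : K ∈ C)
    (hp : UsesCorner K p) (hq : UsesCorner K q) : (cornerLinks C).Reachable p q := by
  have reachable_of_walk : ∀ {x y : K.verts}, K.coe.Walk x y → ∀ a b,
      UsesCorner K (x, a) → UsesCorner K (y, b) →
      (cornerLinks C).Reachable (x.1, a) (y.1, b) := by
    intro x y w
    induction w with
    | @nil x =>
      intro a b ha hb
      rw [((hC.1 K hK).existsUnique_usesCorner hH x.2).unique ha hb]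
    | @cons x z y hxz _ ih =>
      intro a b ha hb
      obtain ⟨d, hd, -⟩ := (hC.1 K hK).existsUnique_usesCorner hH z.2
      have haz := ((hC.1 K hK).adj_iff_of_usesCorner hH ha).1 hxz
      have hdx := ((hC.1 K hK).adj_iff_of_usesCorner hH hd).1 hxz.symm
      refine Reachable.trans (Adj.reachable ?_) (ih d b hd hb)
      exact ⟨⟨haz.1, ⟨ha.2.1, haz.2⟩, hd.2.1, hdx.2⟩, K, hK, ha, hd⟩
  obtain ⟨w⟩ := (hC.1 K hK).1.preconnected ⟨p.1, hp.1⟩ ⟨q.1, hq.1⟩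
  exact reachable_of_walk w p.2 q.2 hp hq

theorem IsCiDC.le_of_cornerLinks_eq (hH : IsCubic H) (hC : IsCiDC H C) (hD : IsCiDC H D)
    (h : cornerLinks C = cornerLinks D) (hK : K ∈ C) (hL : L ∈ D) (hKp : UsesCorner K p)
    (hLp : UsesCorner L p) : K ≤ L :=
  (hC.1 K hK).le_of_usesCorner_imp hH (hD.1 L hL) fun _ hq =>
    hD.usesCorner_of_reachable hH (h ▸ hC.reachable_of_usesCorner hH hK hKp hq) hL hLp

theorem IsCiDC.subset_of_cornerLinks_eq (hH : IsCubic H) (hC : IsCiDC H C) (hD : IsCiDC H D)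
    (h : cornerLinks C = cornerLinks D) : C ⊆ D := by
  intro K hK
  obtain ⟨p, hKp⟩ := (hC.1 K hK).exists_usesCorner hH
  obtain ⟨L, hL, hLp⟩ := hD.exists_mem_usesCorner hH hKp.2.1
  rwa [le_antisymm (hC.le_of_cornerLinks_eq hH hD h hK hL hKp hLp)
    (hD.le_of_cornerLinks_eq hH hC h.symm hL hK hLp hKp)]

theorem cornerLinks_injOn (hH : IsCubic H) : Set.InjOn cornerLinks {C | IsCiDC H C} :=
  fun _ hC _ hD h => (Multiset.Nodup.ext (hC.nodup hH) (hD.nodup hH)).2 fun _ =>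
    ⟨fun hK => hC.subset_of_cornerLinks_eq hH hD h hK,
      fun hK => hD.subset_of_cornerLinks_eq hH hC h.symm hK⟩

end CircuitDoubleCovers

namespace IsTransitionSystemOn

variable {p q : V × V} {x y a : V}

/-- The circuit formed by the corners in the component of `p`. -/
def circuit (hM : IsTransitionSystem H M) (p : V × V) : H.Subgraph where
  verts := {x | ∃ a, H.Adj x a ∧ M.Reachable p (x, a)}
  Adj x y := ∃ a b, M.Adj (x, a) (y, b) ∧ M.Reachable p (x, a)
  adj_sub := fun ⟨_, _, h, _⟩ => (hM.le_cornerGraph h).1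
  edge_vert := fun ⟨a, _, h, hp⟩ => ⟨a, (hM.le_cornerGraph h).2.1.1, hp⟩
  symm := ⟨fun _ _ ⟨a, b, h, hp⟩ => ⟨b, a, h.symm, hp.trans h.reachable⟩⟩

theorem circuit_adj_iff (hM : IsTransitionSystem H M) (hp : M.Reachable p (x, a))
    (hxa : H.Adj x a) : (hM.circuit p).Adj x y ↔ H.Adj x y ∧ a ≠ y := by
  constructor
  · rintro ⟨a', b, hadj, hp'⟩
    obtain rfl := hM.eq_of_reachable (hp.symm.trans hp')
    exact ⟨(hM.le_cornerGraph hadj).1, (hM.le_cornerGraph hadj).2.1.2⟩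
  · rintro ⟨hxy, hay⟩
    obtain ⟨b, hb⟩ := hM.exists_adj (Set.mem_univ x) (Set.mem_univ y) hxy hxa hay
    exact ⟨a, b, hb, hp⟩

theorem usesCorner_circuit_iff (hM : IsTransitionSystem H M) :
    UsesCorner (hM.circuit p) q ↔ H.Adj q.1 q.2 ∧ M.Reachable p q := by
  obtain ⟨x, a⟩ := q
  constructor
  · rintro ⟨⟨b, hxb, hp⟩, hxa, hnadj⟩
    refine ⟨hxa, ?_⟩
    rw [hM.circuit_adj_iff hp hxb, not_and_not_right] at hnadj
    rwa [hnadj hxa] at hp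
  · rintro ⟨hxa, hp⟩
    exact ⟨⟨a, hxa, hp⟩, hxa, fun h => ((hM.circuit_adj_iff hp hxa).1 h).2 rfl⟩

theorem circuit_connected (hM : IsTransitionSystem H M) (hp : H.Adj p.1 p.2) :
    (hM.circuit p).Connected := by
  rw [Subgraph.connected_iff', connected_iff_exists_forall_reachable]
  refine ⟨⟨p.1, p.2, hp, .rfl⟩, ?_⟩
  rintro ⟨x, a, hxa, hpx⟩
  have reachable_of_walk : ∀ {q r : V × V}, M.Walk q r → ∀ hq hr,
      (hM.circuit p).coe.Reachable ⟨q.1, hq⟩ ⟨r.1, hr⟩ ∨ ¬ M.Reachable p q := by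
    intro q r w
    induction w with
    | nil => exact fun _ _ => .inl .rfl
    | @cons q s r hqs _ ih =>
      intro hq hr
      by_cases hpq : M.Reachable p q
      · have hps := hpq.trans hqs.reachable
        have hs : s.1 ∈ (hM.circuit p).verts := ⟨s.2, (hM.le_cornerGraph hqs).2.2.1, hps⟩
        have hadj : (hM.circuit p).coe.Adj ⟨q.1, hq⟩ ⟨s.1, hs⟩ := ⟨q.2, s.2, hqs, hpq⟩
        exact .inl (hadj.reachable.trans ((ih hs hr).resolve_right (not_not_intro hps)))
      · exact .inr hpq
  obtain ⟨w⟩ := hpx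
  exact (reachable_of_walk w _ _).resolve_right (not_not_intro .rfl)

theorem isCircuit_circuit (hH : IsCubic H) (hM : IsTransitionSystem H M)
    (hp : H.Adj p.1 p.2) : IsCircuit (hM.circuit p) := by
  refine ⟨hM.circuit_connected hp, ?_⟩
  rintro x ⟨a, hxa, hpx⟩
  have neighborSet_eq : (hM.circuit p).neighborSet x = H.neighborSet x \ {a} := by
    ext y
    simp only [Subgraph.mem_neighborSet, hM.circuit_adj_iff hpx hxa, Set.mem_sdiff,
      mem_neighborSet, Set.mem_singleton_iff, ne_comm, ne_eq]
  rw [neighborSet_eq, Set.ncard_sdiff_singleton_of_mem (show a ∈ H.neighborSet x from hxa), hH x]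

theorem circuit_eq_circuit_iff (hH : IsCubic H) (hM : IsTransitionSystem H M)
    (hp : H.Adj p.1 p.2) : hM.circuit p = hM.circuit q ↔ M.Reachable p q := by
  constructor
  · intro h
    have huse : UsesCorner (hM.circuit p) p := hM.usesCorner_circuit_iff.2 ⟨hp, .rfl⟩
    rw [h, hM.usesCorner_circuit_iff] at huse
    exact huse.2.symm
  · intro h
    have hq := (hM.isCorner_iff_of_reachable h).1 hp
    have circuit_le : ∀ {p q : V × V}, H.Adj p.1 p.2 → H.Adj q.1 q.2 → M.Reachable p q →
        hM.circuit p ≤ hM.circuit q := fun hp hq h =>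
      (hM.isCircuit_circuit hH hp).le_of_usesCorner_imp hH (hM.isCircuit_circuit hH hq)
        fun r hr => by
          rw [hM.usesCorner_circuit_iff] at hr ⊢
          exact ⟨hr.1, h.symm.trans hr.2⟩
    exact le_antisymm (circuit_le hp hq h) (circuit_le hq hp h.symm)

open scoped Classical in
/-- The set of circuits formed by the components of a transition system. -/
noncomputable def circuits [Fintype V] (hM : IsTransitionSystem H M) : Finset H.Subgraph :=
  (Finset.univ.filter fun p : V × V => H.Adj p.1 p.2).image hM.circuit

variable [Fintype V]

theorem mem_circuits {K : H.Subgraph} (hM : IsTransitionSystem H M) :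
    K ∈ hM.circuits ↔ ∃ p : V × V, H.Adj p.1 p.2 ∧ hM.circuit p = K := by
  simp only [circuits, Finset.mem_image, Finset.mem_filter, Finset.mem_univ, true_and]

open scoped Classical in
theorem filter_circuits_mem_edgeSet {b : V} (hH : IsCubic H) (hM : IsTransitionSystem H M)
    (hya : y ≠ a) (hyb : y ≠ b) (hN : H.neighborSet x = {y, a, b}) :
    hM.circuits.filter (fun K => s(x, y) ∈ K.edgeSet) =
      {hM.circuit (x, a), hM.circuit (x, b)} := by
  have hxy : H.Adj x y := by simp [← mem_neighborSet, hN]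
  have hxa : H.Adj x a := by simp [← mem_neighborSet, hN]
  have hxb : H.Adj x b := by simp [← mem_neighborSet, hN]
  ext K
  simp only [Finset.mem_filter, mem_circuits, Subgraph.mem_edgeSet, Finset.mem_insert,
    Finset.mem_singleton]
  constructor
  · rintro ⟨⟨p, hp, rfl⟩, c, d, hadj, hpx⟩
    obtain ⟨-, ⟨hxc, hcy⟩, -⟩ := hM.le_cornerGraph hadj
    have hcN : c ∈ H.neighborSet x := hxc
    rw [hN] at hcN
    rcases hcN with rfl | rfl | rfl
    exacts [absurd rfl hcy, .inl ((hM.circuit_eq_circuit_iff hH hp).2 hpx),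
      .inr ((hM.circuit_eq_circuit_iff hH hp).2 hpx)]
  · rintro (rfl | rfl)
    exacts [⟨⟨_, hxa, rfl⟩, (hM.circuit_adj_iff .rfl hxa).2 ⟨hxy, hya.symm⟩⟩,
      ⟨⟨_, hxb, rfl⟩, (hM.circuit_adj_iff .rfl hxb).2 ⟨hxy, hyb.symm⟩⟩]

theorem isCiDC_circuits (hH : IsCubic H) (hM : IsTransitionSystem H M) :
    IsCiDC H hM.circuits.val := by
  classical
  constructor
  · intro K hK
    obtain ⟨p, hp, rfl⟩ := hM.mem_circuits.1 hK
    exact hM.isCircuit_circuit hH hp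
  · intro e he
    induction e using Sym2.ind with | _ x y =>
    obtain ⟨a, b, hya, hyb, hab, hN⟩ :=
      exists_eq_insert_pair_of_ncard_eq_three (hH x) (show y ∈ H.neighborSet x from he)
    have hxa : H.Adj x a := by simp [← mem_neighborSet, hN]
    have circuit_ne : hM.circuit (x, a) ≠ hM.circuit (x, b) := fun h =>
      hab (hM.eq_of_reachable ((hM.circuit_eq_circuit_iff hH hxa).1 h))
    have hcard := congrArg Finset.card (hM.filter_circuits_mem_edgeSet hH hya hyb hN)
    rw [Finset.card_pair circuit_ne] at hcard
    rw [← hcard, Multiset.countP_eq_card_filter, Finset.card_def, Finset.filter_val]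

theorem cornerLinks_circuits (hM : IsTransitionSystem H M) :
    cornerLinks hM.circuits.val = M := by
  ext p q
  constructor
  · rintro ⟨⟨hpq, ⟨hp, hpne⟩, -⟩, K, hK, hKp, hKq⟩
    obtain ⟨r, -, rfl⟩ := hM.mem_circuits.1 hK
    rw [hM.usesCorner_circuit_iff] at hKp hKq
    obtain ⟨b, hb⟩ := hM.exists_adj (Set.mem_univ _) (Set.mem_univ _) hpq hp hpne
    rwa [hM.eq_of_reachable (hb.symm.reachable.trans (hKp.2.symm.trans hKq.2))] at hb
  · intro h
    have hadj := hM.le_cornerGraph h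
    exact ⟨hadj, hM.circuit p, hM.mem_circuits.2 ⟨p, hadj.2.1.1, rfl⟩,
      hM.usesCorner_circuit_iff.2 ⟨hadj.2.1.1, .rfl⟩,
      hM.usesCorner_circuit_iff.2 ⟨hadj.2.2.1, h.reachable⟩⟩

end IsTransitionSystemOn

theorem nu_eq_card_isTransitionSystem [Finite V] (hH : IsCubic H) :
    nu H = Nat.card {M // IsTransitionSystem H M} := by
  cases nonempty_fintype V
  have bijOn : Set.BijOn cornerLinks {C | IsCiDC H C} {M | IsTransitionSystem H M} :=
    ⟨fun _ hC => hC.isTransitionSystem_cornerLinks hH, cornerLinks_injOn hH,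
      fun _ hM => ⟨_, hM.isCiDC_circuits hH, hM.cornerLinks_circuits⟩⟩
  rw [nu, ← Nat.card_coe_set_eq]
  exact Nat.card_congr bijOn.equiv

end TransitionSystems

section Masks

/-- The finite set of natural numbers encoded by the binary digits of `m`. The finite part of the
argument computes with such masks, so that the kernel can evaluate it by native arithmetic. -/
def bits (m : ℕ) : Set ℕ := {n | m.testBit n}

/-- The mask of the set `{x, y}`. -/
def pairMask (x y : ℕ) : ℕ := 1 <<< x ||| 1 <<< y

theorem bits_or (m n : ℕ) : bits (m ||| n) = bits m ∪ bits n := by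
  ext x
  simp [bits]

theorem bits_zero : bits 0 = ∅ := by
  ext x
  simp [bits]

theorem bits_pairMask (x y : ℕ) : bits (pairMask x y) = {x, y} := by
  ext z
  simp only [bits, pairMask, Nat.testBit_or, Nat.testBit_shiftLeft, Bool.or_eq_true,
    Bool.and_eq_true, decide_eq_true_eq, Nat.testBit_one_eq_true_iff_self_eq_zero,
    Set.mem_ofPred_eq, Set.mem_insert_iff, Set.mem_singleton_iff]
  omega

theorem beq_or_self_iff {m p : ℕ} : Nat.beq (m ||| p) m = true ↔ bits p ⊆ bits m := by
  rw [Nat.beq_eq, ← Set.union_eq_left, ← bits_or]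
  refine ⟨fun h => by rw [h], fun h => Nat.eq_of_testBit_eq fun n => ?_⟩
  exact Bool.eq_iff_iff.2 (Set.ext_iff.1 h n)

theorem beq_and_zero_iff {c m : ℕ} : Nat.beq (c &&& m) 0 = true ↔ Disjoint (bits c) (bits m) := by
  rw [Nat.beq_eq, Set.disjoint_left]
  refine ⟨fun h n hc hm => ?_, fun h => Nat.eq_of_testBit_eq fun n => ?_⟩
  · have hn := Nat.testBit_and c m n
    rw [h, show c.testBit n = true from hc, show m.testBit n = true from hm] at hn
    simp at hn
  · rw [Nat.testBit_and, Nat.zero_testBit, Bool.and_eq_false_iff, or_iff_not_imp_left]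
    intro hc
    exact Bool.eq_false_iff.2 (h (Bool.eq_true_of_not_eq_false hc))

end Masks

section Gluing

variable {apart cs ds links : List ℕ} {m c : ℕ}

/-- Adds a class `m` to a list `cs` of disjoint classes, merging it with those it meets; fails if
the merged class contains one of the forbidden sets `apart`. -/
def insertClass (apart : List ℕ) : List ℕ → ℕ → Option (List ℕ)
  | [], m => bif apart.any fun p => Nat.beq (m ||| p) m then none else some [m]
  | c :: cs, m =>
    bif Nat.beq (c &&& m) 0 then (insertClass apart cs m).map (c :: ·)
    else insertClass apart cs (c ||| m)

/-- Adds the classes `links` one after the other. -/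
def glue (apart : List ℕ) : List ℕ → List ℕ → Option (List ℕ)
  | [], cs => some cs
  | m :: links, cs => (insertClass apart cs m).bind (glue apart links)

/-- The classes `cs` are pairwise disjoint and contain no set of the list `apart`. -/
structure IsSeparated (apart cs : List ℕ) : Prop where
  disjoint : cs.Pairwise fun c d => Disjoint (bits c) (bits d)
  not_subset : ∀ c ∈ cs, ∀ p ∈ apart, ¬ bits p ⊆ bits c

theorem insertClass_nil_eq_some_iff :
    insertClass apart [] m = some ds ↔ (∀ p ∈ apart, ¬ bits p ⊆ bits m) ∧ [m] = ds := by
  simp only [insertClass, Bool.cond_eq_ite, List.any_eq_true, beq_or_self_iff,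
    Option.ite_none_left_eq_some, not_exists, not_and, Option.some_inj]

open scoped Classical in
theorem insertClass_cons :
    insertClass apart (c :: cs) m =
      if Disjoint (bits c) (bits m) then (insertClass apart cs m).map (c :: ·)
      else insertClass apart cs (c ||| m) := by
  simp only [insertClass, Bool.cond_eq_ite, beq_and_zero_iff]

section Completeness

variable {R : ℕ → ℕ → Prop}

/-- Any two elements of the class `m` are related. -/
def Within (R : ℕ → ℕ → Prop) (m : ℕ) : Prop := ∀ x ∈ bits m, ∀ y ∈ bits m, R x y

theorem Within.or [Std.Symm R] [IsTrans ℕ R] (hc : Within R c) (hm : Within R m)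
    (h : ¬ Disjoint (bits c) (bits m)) : Within R (c ||| m) := by
  obtain ⟨z, hzc, hzm⟩ := Set.not_disjoint_iff.1 h
  have rel_z : ∀ x ∈ bits (c ||| m), R x z := by
    intro x hx
    rw [bits_or] at hx
    exact hx.elim (fun hx => hc x hx z hzc) (fun hx => hm x hx z hzm)
  exact fun x hx y hy => trans_of R (rel_z x hx) (symm_of R (rel_z y hy))

theorem exists_insertClass_eq_some [Std.Symm R] [IsTrans ℕ R]
    (hapart : ∀ p ∈ apart, ¬ Within R p) (hcs : ∀ c ∈ cs, Within R c) (hm : Within R m) :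
    ∃ ds, insertClass apart cs m = some ds ∧ ∀ d ∈ ds, Within R d := by
  induction cs generalizing m with
  | nil =>
    refine ⟨[m], insertClass_nil_eq_some_iff.2 ⟨fun p hp hpm => ?_, rfl⟩, by simpa using hm⟩
    exact hapart p hp fun x hx y hy => hm x (hpm hx) y (hpm hy)
  | cons c cs ih =>
    rw [List.forall_mem_cons] at hcs
    rw [insertClass_cons]
    split_ifs with hdisj
    · obtain ⟨ds, hds, hds'⟩ := ih hcs.2 hm
      exact ⟨c :: ds, by rw [hds, Option.map_some], List.forall_mem_cons.2 ⟨hcs.1, hds'⟩⟩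
    · exact ih hcs.2 (hcs.1.or hm hdisj)

theorem exists_glue_eq_some [Std.Symm R] [IsTrans ℕ R]
    (hapart : ∀ p ∈ apart, ¬ Within R p) (hcs : ∀ c ∈ cs, Within R c)
    (hlinks : ∀ m ∈ links, Within R m) :
    ∃ ds, glue apart links cs = some ds ∧ ∀ d ∈ ds, Within R d := by
  induction links generalizing cs with
  | nil => exact ⟨cs, rfl, hcs⟩
  | cons m links ih =>
    rw [List.forall_mem_cons] at hlinks
    obtain ⟨ds, hds, hds'⟩ := exists_insertClass_eq_some hapart hcs hlinks.1
    rw [glue, hds]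
    exact ih hds' hlinks.2

end Completeness

section Soundness

theorem exists_subset_of_insertClass (h : insertClass apart cs m = some ds) :
    ∀ c ∈ m :: cs, ∃ d ∈ ds, bits c ⊆ bits d := by
  induction cs generalizing m ds with
  | nil =>
    obtain ⟨-, rfl⟩ := insertClass_nil_eq_some_iff.1 h
    exact fun c hc => ⟨c, hc, subset_rfl⟩
  | cons c cs ih =>
    rw [insertClass_cons] at h
    split_ifs at h
    · obtain ⟨ds', hds', rfl⟩ := Option.map_eq_some_iff.1 h
      have := ih hds'
      simp only [List.mem_cons, forall_eq_or_imp, exists_eq_or_imp] at this ⊢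
      exact ⟨.inr this.1, .inl subset_rfl, fun e he => .inr (this.2 e he)⟩
    · have := ih h
      simp only [List.mem_cons, forall_eq_or_imp, bits_or, Set.union_subset_iff] at this ⊢
      obtain ⟨⟨d, hd, hcd, hmd⟩, hcs⟩ := this
      exact ⟨⟨d, hd, hmd⟩, ⟨d, hd, hcd⟩, hcs⟩

theorem disjoint_of_insertClass {s : Set ℕ} (h : insertClass apart cs m = some ds)
    (hs : ∀ c ∈ m :: cs, Disjoint s (bits c)) : ∀ d ∈ ds, Disjoint s (bits d) := by
  induction cs generalizing m ds with
  | nil =>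
    obtain ⟨-, rfl⟩ := insertClass_nil_eq_some_iff.1 h
    exact hs
  | cons c cs ih =>
    simp only [List.forall_mem_cons] at hs ih
    rw [insertClass_cons] at h
    split_ifs at h
    · obtain ⟨ds', hds', rfl⟩ := Option.map_eq_some_iff.1 h
      exact List.forall_mem_cons.2 ⟨hs.2.1, ih hds' ⟨hs.1, hs.2.2⟩⟩
    · refine ih h ⟨?_, hs.2.2⟩
      rw [bits_or, Set.disjoint_union_right]
      exact ⟨hs.2.1, hs.1⟩

theorem IsSeparated.insertClass (hcs : IsSeparated apart cs)
    (h : insertClass apart cs m = some ds) : IsSeparated apart ds := by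
  induction cs generalizing m ds with
  | nil =>
    obtain ⟨hm, rfl⟩ := insertClass_nil_eq_some_iff.1 h
    exact ⟨List.pairwise_singleton _ _, by simpa using hm⟩
  | cons c cs ih =>
    obtain ⟨⟨hc, hdisj⟩, hc', hns⟩ : (_ ∧ _) ∧ _ ∧ _ :=
      ⟨List.pairwise_cons.1 hcs.1, List.forall_mem_cons.1 hcs.2⟩
    rw [insertClass_cons] at h
    split_ifs at h with hcm
    · obtain ⟨ds', hds', rfl⟩ := Option.map_eq_some_iff.1 h
      have hsep := ih ⟨hdisj, hns⟩ hds'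
      refine ⟨List.pairwise_cons.2 ⟨?_, hsep.1⟩, List.forall_mem_cons.2 ⟨hc', hsep.2⟩⟩
      exact disjoint_of_insertClass hds' (List.forall_mem_cons.2 ⟨hcm, hc⟩)
    · exact ih ⟨hdisj, hns⟩ h

theorem exists_subset_of_glue (h : glue apart links cs = some ds) :
    ∀ c ∈ links ++ cs, ∃ d ∈ ds, bits c ⊆ bits d := by
  induction links generalizing cs with
  | nil =>
    obtain rfl := Option.some_injective _ h
    exact fun c hc => ⟨c, hc, subset_rfl⟩
  | cons m links ih =>
    obtain ⟨es, hes, h⟩ := Option.bind_eq_some_iff.1 h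
    have trans_es : ∀ c ∈ m :: cs, ∃ d ∈ ds, bits c ⊆ bits d := fun c hc => by
      obtain ⟨e, he, hce⟩ := exists_subset_of_insertClass hes c hc
      obtain ⟨d, hd, hed⟩ := ih h e (List.mem_append_right _ he)
      exact ⟨d, hd, hce.trans hed⟩
    simp only [List.forall_mem_cons, List.forall_mem_append, List.cons_append] at trans_es ih ⊢
    exact ⟨trans_es.1, (ih h).1, trans_es.2⟩

theorem IsSeparated.glue (hcs : IsSeparated apart cs) (h : glue apart links cs = some ds) :
    IsSeparated apart ds := by
  induction links generalizing cs with
  | nil => rwa [← Option.some_injective _ h]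
  | cons m links ih =>
    obtain ⟨es, hes, h⟩ := Option.bind_eq_some_iff.1 h
    exact ih (hcs.insertClass hes) h

end Soundness

end Gluing

section GluingStates

/-- A finite gluing problem: each edge `e` has two labels on its left and two on its right, which
have to be matched in one of the two possible ways, such that the resulting equivalence classes of
labels contain none of the sets `apart`. The search for solutions treats the edges in `order`. -/
structure Gluing (ι : Type*) where
  left : ι → Bool → ℕ
  right : ι → Bool → ℕ
  apart : List ℕ
  order : List ι
  nodup_order : order.Nodup
  mem_order : ∀ e, e ∈ order

/-- Two labels lie in a common class. -/
def SameClass (cs : List ℕ) (x y : ℕ) : Prop := ∃ c ∈ cs, x ∈ bits c ∧ y ∈ bits c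

theorem SameClass.symm {cs : List ℕ} {x y : ℕ} : SameClass cs x y → SameClass cs y x :=
  fun ⟨c, hc, hx, hy⟩ => ⟨c, hc, hy, hx⟩

theorem IsSeparated.sameClass_trans {apart cs : List ℕ} (hcs : IsSeparated apart cs) {x y z : ℕ} :
    SameClass cs x y → SameClass cs y z → SameClass cs x z := by
  rintro ⟨c, hc, hx, hy⟩ ⟨d, hd, hy', hz⟩
  have : Std.Symm fun c d => Disjoint (bits c) (bits d) := ⟨fun _ _ h => h.symm⟩
  have hcd : c = d := by
    by_contra hne
    exact Set.disjoint_left.1 (hcs.disjoint.forall hc hd hne) hy hy'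
  exact ⟨c, hc, hx, hcd ▸ hz⟩

theorem IsSeparated.not_sameClass {apart cs : List ℕ} (hcs : IsSeparated apart cs) {x y : ℕ}
    (h : pairMask x y ∈ apart) : ¬ SameClass cs x y := by
  rintro ⟨c, hc, hx, hy⟩
  refine hcs.not_subset c hc _ h ?_
  rw [bits_pairMask]
  exact Set.pair_subset hx hy

namespace Gluing

variable {ι : Type*} (D : Gluing ι)

/-- The two matchings across the edge `e`, the labels on the left being matched with those on the
right in the given order if `b = true`, and crosswise otherwise. -/
def links (e : ι) (b : Bool) : List ℕ :=
  [pairMask (D.left e true) (D.right e b), pairMask (D.left e false) (D.right e !b)]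

variable [DecidableEq ι]

/-- All ways to extend the choices `β` and the classes `cs` along the edges of a list. -/
def extensions : List ι → (ι → Bool) → List ℕ → List ((ι → Bool) × List ℕ)
  | [], β, cs => [(β, cs)]
  | e :: es, β, cs => [false, true].flatMap fun b =>
    (glue D.apart (D.links e b) cs).elim [] (extensions es (Function.update β e b))

/-- The solutions of the gluing problem, together with the resulting classes. -/
def states : List ((ι → Bool) × List ℕ) := D.extensions D.order (fun _ => false) []

variable {D} {es : List ι} {β γ : ι → Bool} {cs : List ℕ} {t : (ι → Bool) × List ℕ} {e : ι}

theorem mem_extensions_cons : t ∈ D.extensions (e :: es) β cs ↔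
    ∃ b ds, glue D.apart (D.links e b) cs = some ds ∧
      t ∈ D.extensions es (Function.update β e b) ds := by
  rw [extensions, List.mem_flatMap]
  refine ⟨fun ⟨b, _, h⟩ => ⟨b, ?_⟩, fun ⟨b, ds, hds, h⟩ => ⟨b, by cases b <;> simp, ?_⟩⟩
  · cases hds : glue D.apart (D.links e b) cs with
    | none => rw [hds] at h; exact absurd h (List.not_mem_nil)
    | some ds => rw [hds] at h; exact ⟨ds, rfl, h⟩
  · rwa [hds]

theorem apply_eq_of_mem_extensions (ht : t ∈ D.extensions es β cs) (he : e ∉ es) :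
    t.1 e = β e := by
  induction es generalizing β cs with
  | nil => rw [List.mem_singleton.1 ht]
  | cons e' es ih =>
    obtain ⟨b, ds, -, ht⟩ := mem_extensions_cons.1 ht
    rw [List.mem_cons, not_or] at he
    rw [ih ht he.2, Function.update_of_ne he.1]

theorem isSeparated_of_mem_extensions (hcs : IsSeparated D.apart cs)
    (ht : t ∈ D.extensions es β cs) : IsSeparated D.apart t.2 := by
  induction es generalizing β cs with
  | nil => rwa [List.mem_singleton.1 ht]
  | cons e es ih =>
    obtain ⟨b, ds, hds, ht⟩ := mem_extensions_cons.1 ht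
    exact ih (hcs.glue hds) ht

theorem exists_subset_of_mem_extensions (ht : t ∈ D.extensions es β cs) :
    ∀ c ∈ cs, ∃ d ∈ t.2, bits c ⊆ bits d := by
  induction es generalizing β cs with
  | nil =>
    rw [List.mem_singleton.1 ht]
    exact fun c hc => ⟨c, hc, subset_rfl⟩
  | cons e es ih =>
    obtain ⟨b, ds, hds, ht⟩ := mem_extensions_cons.1 ht
    intro c hc
    obtain ⟨d, hd, hcd⟩ := exists_subset_of_glue hds c (List.mem_append_right _ hc)
    obtain ⟨d', hd', hdd'⟩ := ih ht d hd
    exact ⟨d', hd', hcd.trans hdd'⟩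

theorem exists_links_subset_of_mem_extensions (hes : es.Nodup) (he : e ∈ es)
    (ht : t ∈ D.extensions es β cs) :
    ∀ m ∈ D.links e (t.1 e), ∃ d ∈ t.2, bits m ⊆ bits d := by
  induction es generalizing β cs with
  | nil => exact absurd he List.not_mem_nil
  | cons e' es ih =>
    obtain ⟨he', hes⟩ := List.nodup_cons.1 hes
    obtain ⟨b, ds, hds, ht⟩ := mem_extensions_cons.1 ht
    rcases List.mem_cons.1 he with rfl | he
    · intro m hm
      rw [apply_eq_of_mem_extensions ht he', Function.update_self] at hm
      obtain ⟨d, hd, hmd⟩ := exists_subset_of_glue hds m (List.mem_append_left _ hm)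
      obtain ⟨d', hd', hdd'⟩ := exists_subset_of_mem_extensions ht d hd
      exact ⟨d', hd', hmd.trans hdd'⟩
    · exact ih hes he ht

theorem nodup_map_fst_extensions (hes : es.Nodup) :
    ((D.extensions es β cs).map Prod.fst).Nodup := by
  induction es generalizing β cs with
  | nil => exact List.nodup_singleton _
  | cons e es ih =>
    obtain ⟨he, hes⟩ := List.nodup_cons.1 hes
    rw [extensions, List.map_flatMap]
    refine List.nodup_flatMap.2 ⟨fun b _ => ?_, ?_⟩
    · cases glue D.apart (D.links e b) cs with
      | none => exact List.nodup_nil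
      | some ds => exact ih hes
    · have apply_eq : ∀ b, ∀ γ ∈ ((glue D.apart (D.links e b) cs).elim []
          (D.extensions es (Function.update β e b))).map Prod.fst, γ e = b := by
        intro b γ hγ
        obtain ⟨t, ht, rfl⟩ := List.mem_map.1 hγ
        cases hds : glue D.apart (D.links e b) cs with
        | none => rw [hds] at ht; exact absurd ht List.not_mem_nil
        | some ds =>
          rw [hds] at ht
          rw [apply_eq_of_mem_extensions ht he, Function.update_self]
      refine List.Pairwise.imp (R := (· ≠ ·)) (fun {b b'} hbb' => ?_) (by simp)
      exact fun γ hγ hγ' => hbb' (by rw [← apply_eq b γ hγ, apply_eq b' γ hγ'])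

theorem exists_mem_extensions {R : ℕ → ℕ → Prop} [Std.Symm R] [IsTrans ℕ R]
    (hapart : ∀ p ∈ D.apart, ¬ Within R p) (hlinks : ∀ e, ∀ m ∈ D.links e (γ e), Within R m)
    (hcs : ∀ c ∈ cs, Within R c) (hγ : ∀ e ∉ es, γ e = β e) :
    ∃ ds, (γ, ds) ∈ D.extensions es β cs ∧ ∀ d ∈ ds, Within R d := by
  induction es generalizing β cs with
  | nil => exact ⟨cs, List.mem_singleton.2 (by rw [funext fun e => hγ e List.not_mem_nil]), hcs⟩
  | cons e es ih =>
    obtain ⟨ds, hds, hds'⟩ := exists_glue_eq_some hapart hcs (hlinks e)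
    have hγ' : ∀ e' ∉ es, γ e' = Function.update β e (γ e) e' := fun e' he' => by
      by_cases h : e' = e
      · rw [h, Function.update_self]
      · rw [Function.update_of_ne h, hγ e' (by simp [h, he'])]
    obtain ⟨ds', hmem, hwithin⟩ := ih hds' hγ'
    exact ⟨ds', mem_extensions_cons.2 ⟨γ e, ds, hds, hmem⟩, hwithin⟩

theorem nodup_states : D.states.Nodup :=
  (nodup_map_fst_extensions D.nodup_order).of_map _

theorem injOn_fst_states : Set.InjOn Prod.fst {t | t ∈ D.states} :=
  fun _ ht _ ht' => List.inj_on_of_nodup_map (nodup_map_fst_extensions D.nodup_order) ht ht'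

theorem isSeparated_of_mem_states (ht : t ∈ D.states) : IsSeparated D.apart t.2 :=
  isSeparated_of_mem_extensions ⟨List.Pairwise.nil, by simp⟩ ht

theorem sameClass_of_mem_states (ht : t ∈ D.states) (e : ι) (s : Bool) :
    SameClass t.2 (D.left e s) (D.right e (s == t.1 e)) := by
  have hmem : pairMask (D.left e s) (D.right e (s == t.1 e)) ∈ D.links e (t.1 e) := by
    cases s <;> simp [links]
  obtain ⟨d, hd, hsub⟩ :=
    exists_links_subset_of_mem_extensions D.nodup_order (D.mem_order e) ht _ hmem
  rw [bits_pairMask] at hsub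
  exact ⟨d, hd, hsub (.inl rfl), hsub (.inr rfl)⟩

theorem exists_mem_states {R : ℕ → ℕ → Prop} [Std.Symm R] [IsTrans ℕ R]
    (hapart : ∀ p ∈ D.apart, ¬ Within R p)
    (hγ : ∀ e s, R (D.left e s) (D.right e (s == γ e))) :
    ∃ ds, (γ, ds) ∈ D.states ∧ ∀ d ∈ ds, Within R d := by
  have within_pairMask : ∀ {x y}, R x y → Within R (pairMask x y) := by
    intro x y hxy
    rw [Within, bits_pairMask]
    rintro z (rfl | rfl) w (rfl | rfl)
    exacts [trans_of R hxy (symm_of R hxy), hxy, symm_of R hxy, trans_of R (symm_of R hxy) hxy]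
  refine exists_mem_extensions hapart (fun e => ?_) (by simp) fun e he => absurd (D.mem_order e) he
  have htrue := hγ e true
  have hfalse := hγ e false
  simp only [links, List.forall_mem_cons, List.not_mem_nil, IsEmpty.forall_iff, implies_true,
    and_true]
  exact ⟨within_pairMask (by simpa using htrue), within_pairMask (by simpa using hfalse)⟩

end Gluing

end GluingStates

section FiniteCheck

/-- The path at the corner of side `s` of the `j`-th terminal edge, when the two paths at that edge
are the `j`-th and the `π j`-th. -/
def path {ι : Type*} (π : ι → ι) (j : ι) (s : Bool) : ι := bif s then j else π j

/-- The indices of the three neighbours of the new vertex of the `i`-th reduction. -/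
def hub (i : Fin 5) : Fin 3 → Fin 5 := ![i + 2, i + 3, i + 4]

/-- The edges other than the `k`-th at a vertex whose three edges are enumerated. -/
def side (k : Fin 3) (s : Bool) : Fin 3 := k + bif s then 1 else 2

/-- The label of the corner at the new vertex that avoids its `k`-th edge. -/
def hubLabel (k : Fin 3) : ℕ := 5 + k

/-- The gluing problem of the `i`-th reduction. The label `j < 5` stands for the `j`-th path, `none`
is the edge `u i - u (i + 1)`, and `some k` is the `k`-th edge at the new vertex. -/
def reducedGluing (π : Fin 5 → Fin 5) (i : Fin 5) : Gluing (Option (Fin 3)) where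
  left e s := e.elim (path π i s).val fun k => (path π (hub i k) s).val
  right e s := e.elim (path π (i + 1) s).val fun k => hubLabel (side k s)
  apart := pairMask (hubLabel 0) (hubLabel 1) :: pairMask (hubLabel 1) (hubLabel 2) ::
    pairMask (hubLabel 2) (hubLabel 0) :: (List.finRange 5).map fun j : Fin 5 => pairMask j (π j)
  order := [none, some 0, some 1, some 2]
  nodup_order := by decide
  mem_order := by decide

/-- The label of a corner at the `j`-th vertex of the pentagon: the corner avoids the predecessor
of that vertex, its successor or its third neighbour according to `k = 0, 1, 2`. -/
def innerLabel (j : Fin 5) (k : Fin 3) : ℕ := 5 + 3 * j + k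

/-- The gluing problem of the pentagon. The label `j < 5` stands for the `j`-th path, `inl j` is the
edge `v j - u j`, and `inr j` is the edge `v j - v (j + 1)`. -/
def pentagonGluing (π : Fin 5 → Fin 5) : Gluing (Fin 5 ⊕ Fin 5) where
  left e s := e.elim (fun j => (path π j s).val) fun j => innerLabel j (side 1 s)
  right e s := e.elim (fun j => innerLabel j (side 2 s)) fun j => innerLabel (j + 1) (side 0 s)
  apart := (List.finRange 5).flatMap fun j : Fin 5 => [pairMask j (π j),
    pairMask (innerLabel j 0) (innerLabel j 1), pairMask (innerLabel j 1) (innerLabel j 2),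
    pairMask (innerLabel j 2) (innerLabel j 0)]
  order := [.inl 0, .inl 1, .inr 0, .inl 2, .inr 1, .inl 3, .inr 2, .inl 4, .inr 3, .inr 4]
  nodup_order := by decide
  mem_order := by rintro (j | j) <;> fin_cases j <;> simp

/-- The mask of all `5 * k + l` such that the paths `k` and `l` lie in a common class. -/
def contacts (cs : List ℕ) : ℕ :=
  (cs.flatMap fun c => ((List.range 5).filter c.testBit).map fun k => (c % 32) <<< (5 * k)).foldl
    (· ||| ·) 0

/-- Counts the subfamilies of `ns`: for every union `U` of members of `ns`, the number of members
used in it is at most twice the number of members of `gs` inside `U`. The accumulator `n` is the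
number of members used so far and `U` is their union. -/
def hall (gs : List ℕ) : List ℕ → ℕ → ℕ → Bool
  | [], n, U => Nat.ble n (2 * gs.countP fun g => Nat.beq (U ||| g) U)
  | m :: ns, n, U => hall gs ns n U && hall gs ns (n + 1) (U ||| m)

theorem mem_bits_foldl_or {l : List ℕ} {m n : ℕ} :
    n ∈ bits (l.foldl (· ||| ·) m) ↔ n ∈ bits m ∨ ∃ k ∈ l, n ∈ bits k := by
  induction l generalizing m with
  | nil => simp
  | cons k l ih =>
    rw [List.foldl_cons, ih, bits_or, Set.mem_union, or_assoc, List.exists_mem_cons_iff]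

theorem mem_bits_contacts {cs : List ℕ} {n : ℕ} :
    n ∈ bits (contacts cs) ↔ n / 5 < 5 ∧ SameClass cs (n / 5) (n % 5) := by
  have mem_bits_shiftLeft : ∀ c k,
      n ∈ bits ((c % 32) <<< (5 * k)) ↔ n / 5 = k ∧ n % 5 ∈ bits c := by
    intro c k
    have hmod : n / 5 = k → n - 5 * k = n % 5 := by omega
    rw [show (32 : ℕ) = 2 ^ 5 from rfl]
    simp only [bits, Set.mem_ofPred_eq, Nat.testBit_shiftLeft, Nat.testBit_mod_two_pow,
      Bool.and_eq_true, decide_eq_true_eq]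
    constructor
    · rintro ⟨hle, hlt, hc⟩
      have hk : n / 5 = k := by omega
      exact ⟨hk, hmod hk ▸ hc⟩
    · rintro ⟨hk, hc⟩
      exact ⟨by omega, by omega, hmod hk ▸ hc⟩
  simp only [contacts, mem_bits_foldl_or, bits_zero, Set.mem_empty_iff_false, false_or,
    List.mem_flatMap, List.mem_map, List.mem_filter, List.mem_range]
  constructor
  · rintro ⟨_, ⟨c, hc, k, ⟨hk, hkc⟩, rfl⟩, hn⟩
    obtain ⟨rfl, hmod⟩ := (mem_bits_shiftLeft c k).1 hn
    exact ⟨hk, c, hc, hkc, hmod⟩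
  · rintro ⟨hk, c, hc, hkc, hmod⟩
    exact ⟨_, ⟨c, hc, n / 5, ⟨hk, hkc⟩, rfl⟩, (mem_bits_shiftLeft c _).2 ⟨rfl, hmod⟩⟩

theorem bits_contacts_subset_iff {cs : List ℕ} {P : Fin 5 → Fin 5 → Prop} :
    bits (contacts cs) ⊆ {n | P (Fin.ofNat 5 (n / 5)) (Fin.ofNat 5 (n % 5))} ↔
      ∀ k l : Fin 5, SameClass cs k l → P k l := by
  simp only [Set.subset_def, mem_bits_contacts, Set.mem_ofPred_eq]
  constructor
  · intro h k l hkl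
    have hdiv : (5 * k + l : ℕ) / 5 = k := by omega
    have hmod : (5 * k + l : ℕ) % 5 = l := by omega
    have := h (5 * k + l)
    rw [hdiv, hmod, Fin.ofNat_val_eq_self, Fin.ofNat_val_eq_self] at this
    exact this ⟨k.2, hkl⟩
  · rintro h n ⟨hn, hsame⟩
    refine h _ _ ?_
    rwa [Fin.val_ofNat, Fin.val_ofNat, Nat.mod_eq_of_lt hn, Nat.mod_mod]

open scoped Classical in
theorem add_countP_le_of_hall {gs ns : List ℕ} {n U : ℕ} {A : Set ℕ} (h : hall gs ns n U)
    (hU : bits U ⊆ A) :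
    n + ns.countP (fun m => bits m ⊆ A) ≤ 2 * gs.countP fun g => bits g ⊆ A := by
  induction ns generalizing n U with
  | nil =>
    refine (Nat.le_of_ble_eq_true h).trans ?_
    gcongr
    exact List.countP_mono_left fun g _ hg => by simpa using (beq_or_self_iff.1 hg).trans hU
  | cons m ns ih =>
    rw [hall, Bool.and_eq_true] at h
    by_cases hm : bits m ⊆ A
    · rw [List.countP_cons_of_pos (by simpa using hm), ← add_assoc, add_right_comm]
      exact ih h.2 (by rw [bits_or]; exact Set.union_subset hU hm)
    · rw [List.countP_cons_of_neg (by simpa using hm)]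
      exact ih h.1 hU

theorem hall_of_mem_permutations : ∀ l ∈ (List.finRange 5).permutations',
    (∀ j : Fin 5, l.getD j 0 ≠ j) →
    let π : Fin 5 → Fin 5 := fun j => l.getD j 0
    hall ((pentagonGluing π).states.map fun t => contacts t.2)
      ((List.finRange 5).flatMap fun i => (reducedGluing π i).states.map fun t => contacts t.2)
      0 0 := by
  decide +kernel

end FiniteCheck

section FiniteInequality

theorem hall_of_derangement (π : Equiv.Perm (Fin 5)) (hπ : ∀ j, π j ≠ j) :
    hall ((pentagonGluing π).states.map fun t => contacts t.2)
      ((List.finRange 5).flatMap fun i => (reducedGluing π i).states.map fun t => contacts t.2)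
      0 0 := by
  have getD_eq : ∀ j : Fin 5, (List.ofFn π).getD j 0 = π j := fun j => by
    rw [List.getD_eq_getElem _ _ (by simp), List.getElem_ofFn]
  have hmem : List.ofFn π ∈ (List.finRange 5).permutations' := by
    rw [List.mem_permutations', ← List.ofFn_id]
    exact π.ofFn_comp_perm id
  have hcheck := hall_of_mem_permutations _ hmem fun j => by rw [getD_eq]; exact hπ j
  simpa only [getD_eq] using hcheck

open scoped Classical in
theorem sum_countP_reducedGluing_le (π : Equiv.Perm (Fin 5)) (hπ : ∀ j, π j ≠ j)
    (P : Fin 5 → Fin 5 → Prop) :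
    ∑ i, (reducedGluing π i).states.countP (fun t => ∀ k l : Fin 5, SameClass t.2 k l → P k l) ≤
      2 * (pentagonGluing π).states.countP fun t => ∀ k l : Fin 5, SameClass t.2 k l → P k l := by
  have hcount := add_countP_le_of_hall (hall_of_derangement π hπ)
    (A := {n | P (Fin.ofNat 5 (n / 5)) (Fin.ofNat 5 (n % 5))}) (by simp [bits_zero])
  simpa only [zero_add, List.countP_flatMap, List.countP_map, Function.comp_def,
    bits_contacts_subset_iff, ← Fin.sum_univ_def] using hcount

end FiniteInequality

section Labelling

section Involutions

variable {X : Type*} {a b : Equiv.Perm X}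

theorem mul_zpow_mul_eq_of_involutive (ha : Function.Involutive a) (hb : Function.Involutive b)
    (n : ℤ) : a * (a * b) ^ n = (a * b) ^ (-n) * a := by
  have ha' : a * a = 1 := Equiv.ext ha
  have hb' : b * b = 1 := Equiv.ext hb
  have hconj : a * (a * b) * a⁻¹ = (a * b)⁻¹ := by
    rw [mul_inv_rev, inv_eq_of_mul_eq_one_right ha', inv_eq_of_mul_eq_one_right hb', ← mul_assoc,
      ha', one_mul]
  rw [zpow_neg, ← inv_zpow, ← hconj, conj_zpow, inv_mul_cancel_right]

/- If `(a * b) ^ n` maps `x` to `a x`, then the point in the middle of this orbit segment is fixed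
by `a` or by `b`, depending on the parity of `n`. -/
theorem not_sameCycle_mul_of_involutive (ha : Function.Involutive a) (hb : Function.Involutive b)
    (hafix : ∀ x, a x ≠ x) (hbfix : ∀ x, b x ≠ x) (x : X) : ¬ (a * b).SameCycle x (a x) := by
  rintro ⟨n, hn⟩
  have apply_middle : ∀ m : ℤ, a (((a * b) ^ m) x) = ((a * b) ^ (-m + n)) x := fun m => by
    rw [← Equiv.Perm.mul_apply, mul_zpow_mul_eq_of_involutive ha hb, Equiv.Perm.mul_apply, ← hn,
      ← Equiv.Perm.mul_apply, ← zpow_add]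
  obtain ⟨m, rfl | rfl⟩ := Int.even_or_odd' n
  · refine hafix (((a * b) ^ m) x) ?_
    rw [apply_middle, show -m + 2 * m = m by ring]
  · refine hbfix (((a * b) ^ m) x) (a.injective ?_)
    rw [apply_middle, show -m + (2 * m + 1) = 1 + m by ring, zpow_one_add]
    rfl

theorem exists_bool_apply_eq_not {Q : Type*} {f : Q → Q} (hf : Function.Involutive f)
    (hfix : ∀ q, f q ≠ q) : ∃ χ : Q → Bool, ∀ q, χ (f q) = !χ q := by
  classical
  let _ : LinearOrder Q := IsWellOrder.linearOrder WellOrderingRel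
  refine ⟨fun q => decide (q < f q), fun q => ?_⟩
  simp only [hf q, ← decide_not, decide_eq_decide, not_lt]
  exact ⟨le_of_lt, fun h => lt_of_le_of_ne h (hfix q)⟩

theorem exists_bool_apply_eq_not_and (ha : Function.Involutive a) (hb : Function.Involutive b)
    (hafix : ∀ x, a x ≠ x) (hbfix : ∀ x, b x ≠ x) :
    ∃ χ : X → Bool, ∀ x, χ (a x) = !χ x ∧ χ (b x) = !χ x := by
  let cycles := Equiv.Perm.SameCycle.setoid (a * b)
  have sameCycle_apply : ∀ x y, (a * b).SameCycle x y → (a * b).SameCycle (a x) (a y) := by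
    rintro x _ ⟨n, rfl⟩
    refine ⟨-n, ?_⟩
    rw [← Equiv.Perm.mul_apply, ← mul_zpow_mul_eq_of_involutive ha hb, Equiv.Perm.mul_apply]
  let f : Quotient cycles → Quotient cycles := Quotient.map a sameCycle_apply
  have hf : Function.Involutive f := by
    rintro ⟨x⟩
    exact congrArg (Quotient.mk cycles) (ha x)
  have hfix : ∀ q, f q ≠ q := by
    rintro ⟨x⟩ h
    exact not_sameCycle_mul_of_involutive ha hb hafix hbfix x (Quotient.exact h).symm
  obtain ⟨χ, hχ⟩ := exists_bool_apply_eq_not hf hfix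
  have hbx : ∀ x, (a * b).SameCycle (b x) (a x) := fun x =>
    ⟨1, by rw [zpow_one, Equiv.Perm.mul_apply, hb]⟩
  exact ⟨fun x => χ (Quotient.mk cycles x), fun x =>
    ⟨hχ (Quotient.mk cycles x),
      (congrArg χ (Quotient.sound (hbx x))).trans (hχ (Quotient.mk cycles x))⟩⟩

end Involutions

section Derangement

variable {ι : Type*} {r : ι × Bool → ι × Bool → Prop}

theorem exists_partner_of_pairing (hr : Equivalence r)
    (hpair : ∀ x, ∃ y, y ≠ x ∧ ∀ z, r x z ↔ z = x ∨ z = y) :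
    ∃ p : Equiv.Perm (ι × Bool), Function.Involutive p ∧ (∀ x, p x ≠ x) ∧
      ∀ x y, r x y ↔ y = x ∨ y = p x := by
  choose p hpne hp using hpair
  have hinv : Function.Involutive p := fun x =>
    (((hp (p x) x).1 (hr.symm ((hp x (p x)).2 (.inr rfl)))).resolve_left (hpne x).symm).symm
  exact ⟨hinv.toPerm, hinv, hpne, hp⟩

theorem exists_orientation {p : Equiv.Perm (ι × Bool)} (hinv : Function.Involutive p)
    (hfix : ∀ x, p x ≠ x) : ∃ (f : ι → Bool) (g : ι → Bool → ι), ∀ j s,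
      p (j, s == f j) = (g j s, (!s) == f (g j s)) := by
  have hswap : Function.Involutive fun x : ι × Bool => (x.1, !x.2) := fun x => by simp
  obtain ⟨χ, hχ⟩ := exists_bool_apply_eq_not_and (a := hswap.toPerm) hswap hinv
    (fun x h => by simpa using congrArg Prod.snd h) hfix
  let f : ι → Bool := fun j => χ (j, true)
  have χ_eq : ∀ x, χ x = (x.2 == f x.1) := by
    rintro ⟨j, _ | _⟩
    · exact ((hχ (j, true)).1).trans (Bool.false_beq _).symm
    · exact (Bool.true_beq _).symm
  have beq_beq_cancel : ∀ s t : Bool, ((s == t) == t) = s := by decide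
  refine ⟨f, fun j s => (p (j, s == f j)).1, fun j s => Prod.ext rfl ?_⟩
  have hpχ := (hχ (j, s == f j)).2
  rw [χ_eq, χ_eq, beq_beq_cancel] at hpχ
  exact (beq_beq_cancel _ _).symm.trans (congrArg (· == _) hpχ)

theorem exists_derangement_of_pairing (hr : Equivalence r)
    (hpair : ∀ x, ∃ y, y ≠ x ∧ ∀ z, r x z ↔ z = x ∨ z = y)
    (hne : ∀ j s, ¬ r (j, s) (j, !s)) :
    ∃ (f : ι → Bool) (π : Equiv.Perm ι), (∀ j, π j ≠ j) ∧ ∀ j k s t,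
      r (j, s == f j) (k, t == f k) ↔ path π j s = path π k t := by
  obtain ⟨p, hinv, hfix, hp⟩ := exists_partner_of_pairing hr hpair
  obtain ⟨f, g, hg⟩ := exists_orientation hinv hfix
  have g_g : ∀ j s, g (g j s) (!s) = j := fun j s => by
    have h := hg (g j s) (!s)
    rw [← hg j s, hinv] at h
    exact (congrArg Prod.fst h).symm
  let π : Equiv.Perm ι := ⟨(g · false), (g · true), (g_g · false), (g_g · true)⟩
  have hmem : ∀ j k s t, r (j, s == f j) (k, t == f k) ↔ t = s ∧ k = j ∨ t = !s ∧ k = g j s := by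
    intro j k s t
    have beq_left_cancel : ∀ a b c : Bool, (a == c) = (b == c) ↔ a = b := by decide
    rw [hp, hg, Prod.mk.injEq, Prod.mk.injEq]
    refine or_congr ?_ ?_ <;> rw [and_comm] <;> refine and_congr_left ?_ <;> rintro rfl <;>
      exact beq_left_cancel _ _ _
  refine ⟨f, π, fun j hj => ?_, fun j k s t => (hmem j k s t).trans ?_⟩
  · have hrel := (hmem j j false true).2 (.inr ⟨rfl, hj.symm⟩)
    rw [show (true == f j) = !(false == f j) by simp] at hrel
    exact hne j _ hrel
  · have symm_apply : π.symm j = g j true := rfl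
    cases s <;> cases t <;> simp only [path, cond_true, cond_false, Bool.not_true, Bool.not_false,
      true_and, reduceCtorEq, false_and, or_false, false_or, ← symm_apply, π.eq_symm_apply,
      π.apply_eq_iff_eq, eq_comm]
    rfl

end Derangement

end Labelling

section Terminals

theorem existsUnique_other_of_ncard_neighborSet_eq_one {X : Type*} [Finite X]
    {Γ : SimpleGraph X} (hΓ : Γ.Connected)
    (hdeg : ∀ z, (Γ.neighborSet z).ncard = 1 ∨ (Γ.neighborSet z).ncard = 2) {x : X}
    (hx : (Γ.neighborSet x).ncard = 1) : ∃! y, y ≠ x ∧ (Γ.neighborSet y).ncard = 1 := by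
  classical
  have := Fintype.ofFinite X
  have ncard_eq : ∀ z, (Γ.neighborSet z).ncard = Γ.degree z := fun z => by
    rw [← card_neighborSet_eq_degree, Set.ncard_eq_toFinset_card', Set.toFinset_card]
  simp only [ncard_eq] at *
  let leaves : Finset X := Finset.univ.filter fun z => Γ.degree z = 1
  have hxl : x ∈ leaves := by simp [leaves, hx]
  have hsum : ∑ z, Γ.degree z + leaves.card = 2 * Fintype.card X := by
    rw [Finset.card_filter, ← Finset.sum_add_distrib, Finset.sum_congr rfl (g := fun _ => 2)]
    · rw [Finset.sum_const, Finset.card_univ, smul_eq_mul, mul_comm]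
    · intro z _
      rcases hdeg z with h | h <;> simp [h]
  -- A connected graph has at least `card X - 1` edges, so there are at most two leaves.
  have hedges := hΓ.card_vert_le_card_edgeSet_add_one
  rw [Nat.card_eq_fintype_card, Nat.card_eq_fintype_card, ← edgeFinset_card] at hedges
  have hcard : (leaves.erase x).card = 1 := by
    have := Γ.sum_degrees_eq_twice_card_edges
    have := Finset.card_pos.2 ⟨x, hxl⟩
    rw [Finset.card_erase_of_mem hxl]
    omega
  simpa [leaves] using Finset.card_eq_one_iff_existsUnique.1 hcard

theorem ncard_neighborSet_toSimpleGraph {X : Type*} {Γ : SimpleGraph X}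
    {C : Γ.ConnectedComponent} (z : C) :
    (C.toSimpleGraph.neighborSet z).ncard = (Γ.neighborSet z.1).ncard := by
  rw [← Set.ncard_image_of_injective _ Subtype.val_injective]
  congr 1
  ext w
  refine ⟨?_, fun h => ⟨⟨w, C.mem_supp_of_adj_mem_supp z.2 h⟩, h, rfl⟩⟩
  rintro ⟨w, hw, rfl⟩
  exact hw

theorem existsUnique_reachable_of_ncard_neighborSet_eq_one {X : Type*} [Finite X]
    {Γ : SimpleGraph X} {x : X} (hdeg : ∀ z, Γ.Reachable x z →
      (Γ.neighborSet z).ncard = 1 ∨ (Γ.neighborSet z).ncard = 2)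
    (hx : (Γ.neighborSet x).ncard = 1) :
    ∃! y, y ≠ x ∧ Γ.Reachable x y ∧ (Γ.neighborSet y).ncard = 1 := by
  let C := Γ.connectedComponentMk x
  have mem_iff : ∀ z, z ∈ C ↔ Γ.Reachable x z := fun z =>
    ConnectedComponent.eq.trans ⟨Reachable.symm, Reachable.symm⟩
  obtain ⟨y, ⟨hyx, hy⟩, hunique⟩ := existsUnique_other_of_ncard_neighborSet_eq_one
    C.connected_toSimpleGraph (x := ⟨x, (mem_iff x).2 .rfl⟩)
    (fun z => by
      rw [ncard_neighborSet_toSimpleGraph]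
      exact hdeg _ ((mem_iff _).1 z.2))
    (by rwa [ncard_neighborSet_toSimpleGraph])
  rw [ncard_neighborSet_toSimpleGraph] at hy
  refine ⟨y, ⟨fun h => hyx (Subtype.ext h), (mem_iff _).1 y.2, hy⟩, fun z ⟨hzx, hz, hz1⟩ => ?_⟩
  refine congrArg Subtype.val (hunique ⟨z, (mem_iff z).2 hz⟩ ⟨fun h => hzx ?_, ?_⟩)
  · exact congrArg Subtype.val h
  · rwa [ncard_neighborSet_toSimpleGraph]

variable {V : Type*} {G : SimpleGraph V} {S : Set V} {B : SimpleGraph (V × V)} {p : V × V}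

/-- The corners in `S` that use an edge leaving `S`. The component of such a corner in a transition
system on `S` is a path that ends there. -/
def IsTerminal (G : SimpleGraph V) (S : Set V) (p : V × V) : Prop :=
  p.1 ∈ S ∧ G.Adj p.1 p.2 ∧ ∃ w ∉ S, G.Adj p.1 w ∧ w ≠ p.2

namespace IsTransitionSystemOn

theorem ncard_neighborSet (hB : IsTransitionSystemOn G S B) (hp : p.1 ∈ S)
    (hadj : G.Adj p.1 p.2) :
    (B.neighborSet p).ncard = ((G.neighborSet p.1 \ {p.2}) ∩ S).ncard := by
  obtain ⟨x, a⟩ := p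
  have hinj : Set.InjOn Prod.fst (B.neighborSet (x, a)) := by
    rintro ⟨y, b⟩ hb ⟨_, c⟩ hc rfl
    rw [hB.eq_of_adj_adj hb hc]
  rw [← hinj.ncard_image]
  congr 1
  ext y
  constructor
  · rintro ⟨⟨y, b⟩, hb, rfl⟩
    have := hB.le_cornerGraph hb
    exact ⟨⟨this.1, this.2.1.2.symm⟩, hB.mem_of_adj hb.symm⟩
  · rintro ⟨⟨hxy, hya⟩, hy⟩
    obtain ⟨b, hb⟩ := hB.exists_adj hp hy hxy hadj (Ne.symm hya)
    exact ⟨(y, b), hb, rfl⟩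

theorem ncard_neighborSet_eq_one (hB : IsTransitionSystemOn G S B) (hG : IsCubic G)
    (hS : ∀ x ∈ S, (G.neighborSet x \ S).Subsingleton) (hp : IsTerminal G S p) :
    (B.neighborSet p).ncard = 1 := by
  obtain ⟨hpS, hadj, w, hw, hpw, hwp⟩ := hp
  have inter_eq : (G.neighborSet p.1 \ {p.2}) ∩ S = (G.neighborSet p.1 \ {p.2}) \ {w} := by
    ext y
    refine and_congr_right fun hy => ⟨fun hyS hyw => hw ?_, fun hyw => ?_⟩
    · rwa [← Set.mem_singleton_iff.1 hyw]
    · by_contra hyS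
      exact hyw (hS p.1 hpS ⟨hy.1, hyS⟩ ⟨hpw, hw⟩)
  rw [hB.ncard_neighborSet hpS hadj, inter_eq,
    Set.ncard_sdiff_singleton_of_mem (show w ∈ G.neighborSet p.1 \ {p.2} from ⟨hpw, hwp⟩),
    Set.ncard_sdiff_singleton_of_mem (show p.2 ∈ G.neighborSet p.1 from hadj), hG]

theorem ncard_neighborSet_eq_two (hB : IsTransitionSystemOn G S B) (hG : IsCubic G)
    (hpS : p.1 ∈ S) (hadj : G.Adj p.1 p.2) (hp : ¬ IsTerminal G S p) :
    (B.neighborSet p).ncard = 2 := by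
  have hsub : G.neighborSet p.1 \ {p.2} ⊆ S := fun w hw => by
    by_contra hwS
    exact hp ⟨hpS, hadj, w, hwS, hw.1, hw.2⟩
  rw [hB.ncard_neighborSet hpS hadj, Set.inter_eq_left.2 hsub,
    Set.ncard_sdiff_singleton_of_mem (show p.2 ∈ G.neighborSet p.1 from hadj), hG]

theorem existsUnique_isTerminal [Finite V] (hB : IsTransitionSystemOn G S B) (hG : IsCubic G)
    (hS : ∀ x ∈ S, (G.neighborSet x \ S).Subsingleton) (hp : IsTerminal G S p) :
    ∃! q, q ≠ p ∧ B.Reachable p q ∧ IsTerminal G S q := by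
  have htwo : ∀ q, B.Reachable p q → ¬ IsTerminal G S q → (B.neighborSet q).ncard = 2 :=
    fun q hq => hB.ncard_neighborSet_eq_two hG ((hB.mem_iff_of_reachable hq).1 hp.1)
      ((hB.isCorner_iff_of_reachable hq).1 hp.2.1)
  have hone : ∀ q, B.Reachable p q → ((B.neighborSet q).ncard = 1 ↔ IsTerminal G S q) := by
    refine fun q hq => ⟨fun h => ?_, hB.ncard_neighborSet_eq_one hG hS⟩
    by_contra hterm
    have := htwo q hq hterm
    omega
  have hdeg : ∀ q, B.Reachable p q →
      (B.neighborSet q).ncard = 1 ∨ (B.neighborSet q).ncard = 2 := fun q hq =>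
    or_iff_not_imp_left.2 fun h => htwo q hq (mt (hone q hq).2 h)
  refine (existsUnique_congr fun q => ?_).1
    (existsUnique_reachable_of_ncard_neighborSet_eq_one hdeg ((hone p .rfl).2 hp))
  exact and_congr_right fun _ => and_congr_right fun hq => hone q hq

end IsTransitionSystemOn

end Terminals

section Coverings

variable {V W : Type*} {G : SimpleGraph V} {H : SimpleGraph W} {S : Set V} {φ : V → W}
  {M : SimpleGraph (W × W)} {p q : V × V}

/-- The map `φ` is a covering on `S`: it carries the star of each vertex in `S` bijectively to the
star of its image. -/
def IsCoveringOn (φ : V → W) (G : SimpleGraph V) (S : Set V) (H : SimpleGraph W) : Prop :=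
  ∀ x ∈ S, Set.BijOn φ (G.neighborSet x) (H.neighborSet (φ x))

/-- The pullback to the edges of `G` inside `S` of a transition system. -/
def pullback (φ : V → W) (G : SimpleGraph V) (S : Set V) (M : SimpleGraph (W × W)) :
    SimpleGraph (V × V) where
  Adj p q := (p.1 ∈ S ∧ q.1 ∈ S ∧ (cornerGraph G).Adj p q) ∧ M.Adj (p.map φ φ) (q.map φ φ)
  symm := ⟨fun _ _ ⟨⟨hp, hq, h⟩, hM⟩ => ⟨⟨hq, hp, h.symm⟩, hM.symm⟩⟩
  loopless := ⟨fun _ h => h.2.ne rfl⟩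

theorem reachable_map_of_pullback (h : (pullback φ G S M).Reachable p q) :
    M.Reachable (p.map φ φ) (q.map φ φ) :=
  h.map (G := pullback φ G S M) ⟨Prod.map φ φ, fun h => h.2⟩

namespace IsCoveringOn

variable {x y a : V}

theorem adj (hφ : IsCoveringOn φ G S H) (hx : x ∈ S) (ha : G.Adj x a) : H.Adj (φ x) (φ a) :=
  (hφ x hx).mapsTo ha

theorem exists_pullback_adj (hφ : IsCoveringOn φ G S H) (hM : IsTransitionSystem H M)
    (hx : x ∈ S) (hy : y ∈ S) (hxy : G.Adj x y) (ha : G.Adj x a) (hay : a ≠ y) :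
    ∃ b, (pullback φ G S M).Adj (x, a) (y, b) := by
  have hne : φ a ≠ φ y := fun h => hay ((hφ x hx).injOn ha hxy h)
  obtain ⟨c, hc⟩ := hM.exists_adj trivial trivial (hφ.adj hx hxy) (hφ.adj hx ha) hne
  obtain ⟨-, -, hyc, hcx⟩ := hM.le_cornerGraph hc
  obtain ⟨b, hb, rfl⟩ := (hφ y hy).surjOn hyc
  have hbx : b ≠ x := fun h => hcx (congrArg φ h)
  exact ⟨b, ⟨hx, hy, hxy, ⟨ha, hay⟩, hb, hbx⟩, hc⟩

theorem isTransitionSystemOn_pullback (hφ : IsCoveringOn φ G S H)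
    (hM : IsTransitionSystem H M) : IsTransitionSystemOn G S (pullback φ G S M) where
  le_cornerGraph _ _ h := h.1.2.2
  mem_of_adj {_ _} h := h.1.1
  exists_adj := hφ.exists_pullback_adj hM
  eq_of_reachable {x a b} h := by
    obtain ⟨w⟩ := h
    cases w with
    | nil => rfl
    | cons hadj w =>
      have hreach : (pullback φ G S M).Reachable (x, a) (x, b) := hadj.reachable.trans ⟨w⟩
      have ha : G.Adj x a := hadj.1.2.2.2.1.1
      have hb : G.Adj x b := (reachable_iff_of_forall_adj (Γ := pullback φ G S M)
        (P := fun p => G.Adj p.1 p.2) (fun h _ => h.1.2.2.2.2.1) hreach).1 ha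
      exact (hφ x hadj.1.1).injOn ha hb (hM.eq_of_reachable (reachable_map_of_pullback hreach))

end IsCoveringOn

end Coverings

section MarkedEdges

variable {V W ι : Type*} {G : SimpleGraph V} {H : SimpleGraph W} {S : Set V}
  {B : SimpleGraph (V × V)} {M M' : SimpleGraph (W × W)} {γ : ι → Bool}

/-- `X true` and `X false` are the neighbours of `x` other than `y`. -/
def IsSides (H : SimpleGraph W) (x y : W) (X : Bool → W) : Prop :=
  Set.BijOn X Set.univ (H.neighborSet x \ {y})

/-- A family of edges of `H`, with an enumeration of the two further edges at each end. -/
structure MarkedEdges (H : SimpleGraph W) (ι : Type*) where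
  fst : ι → W
  snd : ι → W
  fstSide : ι → Bool → W
  sndSide : ι → Bool → W
  adj : ∀ e, H.Adj (fst e) (snd e)
  isSides_fst : ∀ e, IsSides H (fst e) (snd e) (fstSide e)
  isSides_snd : ∀ e, IsSides H (snd e) (fst e) (sndSide e)

theorem IsSides.adj {x y : W} {X : Bool → W} (hX : IsSides H x y X) (s : Bool) :
    H.Adj x (X s) ∧ X s ≠ y := hX.mapsTo (Set.mem_univ s)

theorem IsSides.exists_eq {x y a : W} {X : Bool → W} (hX : IsSides H x y X) (ha : H.Adj x a)
    (hay : a ≠ y) : ∃ s, X s = a := by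
  obtain ⟨s, -, hs⟩ := hX.surjOn ⟨ha, hay⟩
  exact ⟨s, hs⟩

theorem IsSides.injective {x y : W} {X : Bool → W} (hX : IsSides H x y X) :
    Function.Injective X := Set.injOn_univ.1 hX.injOn

namespace MarkedEdges

/-- The corner on the side `s` of the first end of the edge `e`. -/
def left (E : MarkedEdges H ι) (e : ι) (s : Bool) : W × W := (E.fst e, E.fstSide e s)

/-- The corner on the side `s` of the second end of the edge `e`. -/
def right (E : MarkedEdges H ι) (e : ι) (s : Bool) : W × W := (E.snd e, E.sndSide e s)

/-- The edge `e` joins `x` and `y`. -/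
def Joins (E : MarkedEdges H ι) (e : ι) (x y : W) : Prop :=
  (x = E.fst e ∧ y = E.snd e) ∨ (x = E.snd e ∧ y = E.fst e)

/-- The links across the marked edges that are described by the choices `γ`. -/
def links (E : MarkedEdges H ι) (γ : ι → Bool) : SimpleGraph (W × W) :=
  SimpleGraph.fromRel fun p q => ∃ e s, p = E.left e s ∧ q = E.right e (s == γ e)

variable {E : MarkedEdges H ι} {e : ι} {s : Bool} {p q : W × W}

theorem cornerGraph_adj_left_right (t : Bool) :
    (cornerGraph H).Adj (E.left e s) (E.right e t) :=
  ⟨E.adj e, (E.isSides_fst e).adj s, (E.isSides_snd e).adj t⟩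

theorem links_adj_left_right : (E.links γ).Adj (E.left e s) (E.right e (s == γ e)) :=
  ⟨(cornerGraph_adj_left_right _).ne, .inl ⟨e, s, rfl, rfl⟩⟩

theorem links_adj_cases (h : (E.links γ).Adj p q) : ∃ e s,
    (p = E.left e s ∧ q = E.right e (s == γ e)) ∨ (q = E.left e s ∧ p = E.right e (s == γ e)) := by
  obtain ⟨-, ⟨e, s, h⟩ | ⟨e, s, h⟩⟩ := h
  exacts [⟨e, s, .inl h⟩, ⟨e, s, .inr h⟩]

theorem links_le_of_forall_adj (hM : ∀ e s, M.Adj (E.left e s) (E.right e (s == γ e))) :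
    E.links γ ≤ M := by
  intro p q h
  obtain ⟨e, s, ⟨rfl, rfl⟩ | ⟨rfl, rfl⟩⟩ := links_adj_cases h
  exacts [hM e s, (hM e s).symm]

theorem exists_links_adj {x y a : W} (h : E.Joins e x y) (ha : H.Adj x a) (hay : a ≠ y) :
    ∃ b, (E.links γ).Adj (x, a) (y, b) := by
  obtain ⟨rfl, rfl⟩ | ⟨rfl, rfl⟩ := h
  · obtain ⟨s, rfl⟩ := (E.isSides_fst e).exists_eq ha hay
    exact ⟨_, links_adj_left_right⟩
  · obtain ⟨t, rfl⟩ := (E.isSides_snd e).exists_eq ha hay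
    have hadj := links_adj_left_right (E := E) (γ := γ) (e := e) (s := t == γ e)
    rw [show ((t == γ e) == γ e) = t by cases t <;> cases γ e <;> rfl] at hadj
    exact ⟨_, hadj.symm⟩

theorem exists_forall_adj (E : MarkedEdges H ι) (hM : IsTransitionSystem H M) :
    ∃ γ : ι → Bool, ∀ e s, M.Adj (E.left e s) (E.right e (s == γ e)) := by
  suffices h : ∀ e, ∃ b, ∀ s, M.Adj (E.left e s) (E.right e (s == b)) from Classical.skolem.1 h
  intro e
  have exists_right : ∀ s, ∃ t, M.Adj (E.left e s) (E.right e t) := by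
    intro s
    obtain ⟨b, hb⟩ := hM.exists_adj trivial trivial (E.adj e) ((E.isSides_fst e).adj s).1
      ((E.isSides_fst e).adj s).2
    obtain ⟨-, -, hadj, hne⟩ := hM.le_cornerGraph hb
    obtain ⟨t, rfl⟩ := (E.isSides_snd e).exists_eq hadj hne
    exact ⟨t, hb⟩
  choose f hf using exists_right
  have f_ne : f false ≠ f true := fun h => Bool.false_ne_true ((E.isSides_fst e).injective
    (hM.eq_of_reachable ((hf false).reachable.trans (h ▸ (hf true).symm.reachable))))
  refine ⟨f true, fun s => ?_⟩
  rw [show (s == f true) = f s by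
    revert f_ne
    cases s <;> cases f true <;> cases f false <;> decide]
  exact hf s

theorem le_of_pullback_eq {φ : V → W} (hφ : IsCoveringOn φ G S H)
    (hM : IsTransitionSystem H M) (hcover : ∀ p q, H.Adj p q →
      (∃ x ∈ S, ∃ y ∈ S, G.Adj x y ∧ φ x = p ∧ φ y = q) ∨ ∃ e, E.Joins e p q)
    (hγ : ∀ e s, M.Adj (E.left e s) (E.right e (s == γ e)))
    (hγ' : ∀ e s, M'.Adj (E.left e s) (E.right e (s == γ e)))
    (hpull : pullback φ G S M = pullback φ G S M') : M ≤ M' := by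
  rintro ⟨p, a⟩ ⟨q, b⟩ hadj
  obtain ⟨hpq, ⟨hpa, haq⟩, hqb, hbp⟩ := hM.le_cornerGraph hadj
  obtain ⟨x, hx, y, hy, hxy, rfl, rfl⟩ | ⟨e, he⟩ := hcover p q hpq
  · obtain ⟨a, ha, rfl⟩ := (hφ x hx).surjOn hpa
    obtain ⟨b, hb, rfl⟩ := (hφ y hy).surjOn hqb
    have hay : a ≠ y := fun h => haq (congrArg φ h)
    have hbx : b ≠ x := fun h => hbp (congrArg φ h)
    have : (pullback φ G S M).Adj (x, a) (y, b) := ⟨⟨hx, hy, hxy, ⟨ha, hay⟩, hb, hbx⟩, hadj⟩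
    exact (hpull ▸ this).2
  · obtain ⟨c, hc⟩ := exists_links_adj (γ := γ) he hpa haq
    rw [hM.eq_of_adj_adj hadj (links_le_of_forall_adj hγ hc)]
    exact links_le_of_forall_adj hγ' hc

end MarkedEdges

theorem pullback_sup_links {E : MarkedEdges G ι} (hB : IsTransitionSystemOn G S B)
    (hE : ∀ e, E.snd e ∉ S) : pullback id G S (B ⊔ E.links γ) = B := by
  ext p q
  have ne_right : ∀ {x : V × V} {e s}, x.1 ∈ S → x ≠ E.right e s := by
    rintro _ e s hx rfl
    exact hE e hx
  constructor
  · rintro ⟨⟨hp, hq, -⟩, hadj | hadj⟩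
    · exact hadj
    · obtain ⟨e, s, ⟨-, h⟩ | ⟨-, h⟩⟩ := MarkedEdges.links_adj_cases hadj
      exacts [absurd h (ne_right hq), absurd h (ne_right hp)]
  · exact fun h => ⟨⟨hB.mem_of_adj h, hB.mem_of_adj h.symm, hB.le_cornerGraph h⟩, .inl h⟩

theorem eq_of_sup_links_eq {E : MarkedEdges G ι} {γ' : ι → Bool}
    (hM : IsTransitionSystem G (B ⊔ E.links γ)) (h : B ⊔ E.links γ = B ⊔ E.links γ') :
    γ = γ' := by
  funext e
  have hadj : ∀ {δ : ι → Bool}, (B ⊔ E.links δ).Adj (E.left e true) (E.right e (δ e)) := fun {δ} =>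
    .inr (by simpa only [Bool.true_beq] using E.links_adj_left_right (γ := δ) (s := true))
  exact (E.isSides_snd e).injective (hM.eq_of_adj_adj hadj (h ▸ hadj))

section Labels

variable {D : Gluing ι} [DecidableEq ι] {E : MarkedEdges H ι} {lab : W × W → ℕ → Prop}

theorem exists_mem_states_of_isTransitionSystem (hM : IsTransitionSystem H M)
    (hγ : ∀ e s, M.Adj (E.left e s) (E.right e (s == γ e)))
    (hleft : ∀ e s, lab (E.left e s) (D.left e s))
    (hright : ∀ e s, lab (E.right e s) (D.right e s))
    (hlab : ∀ {p q n}, lab p n → lab q n → M.Reachable p q)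
    (hapart : ∀ m ∈ D.apart, ∃ k l x a b, m = pairMask k l ∧ a ≠ b ∧ lab (x, a) k ∧ lab (x, b) l) :
    ∃ ds, (γ, ds) ∈ D.states ∧
      ∀ {k l p q}, SameClass ds k l → lab p k → lab q l → M.Reachable p q := by
  let R : ℕ → ℕ → Prop := fun k l => ∃ p q, lab p k ∧ lab q l ∧ M.Reachable p q
  have : Std.Symm R := ⟨fun _ _ ⟨p, q, hp, hq, h⟩ => ⟨q, p, hq, hp, h.symm⟩⟩
  have : IsTrans ℕ R := ⟨fun _ _ _ ⟨p, _, hp, hx, h⟩ ⟨_, q, hy, hq, h'⟩ =>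
    ⟨p, q, hp, hq, (h.trans (hlab hx hy)).trans h'⟩⟩
  have reachable_of_rel : ∀ {k l p q}, R k l → lab p k → lab q l → M.Reachable p q :=
    fun ⟨_, _, hp', hq', h⟩ hp hq => (hlab hp hp').trans (h.trans (hlab hq' hq))
  have not_within : ∀ m ∈ D.apart, ¬ Within R m := by
    intro m hm hwithin
    obtain ⟨k, l, x, a, b, rfl, hab, ha, hb⟩ := hapart m hm
    have hkl : R k l := hwithin _ (by simp [bits_pairMask]) _ (by simp [bits_pairMask])
    exact hab (hM.eq_of_reachable (reachable_of_rel hkl ha hb))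
  obtain ⟨ds, hds, hwithin⟩ := D.exists_mem_states not_within
    fun e s => ⟨_, _, hleft e s, hright e _, (hγ e s).reachable⟩
  exact ⟨ds, hds, fun ⟨d, hd, hk, hl⟩ => reachable_of_rel (hwithin d hd _ hk _ hl)⟩

theorem reachable_sup_cases {X Y : Type*} {Γ Λ : SimpleGraph X} {lab : X → Y → Prop}
    {r : Y → Y → Prop} [IsTrans Y r] (hlab : ∀ {p q n}, Γ.Adj p q → lab p n → lab q n)
    (hunique : ∀ {p m n}, lab p m → lab p n → m = n)
    (hΛ : ∀ {p q}, Λ.Adj p q → ∃ m n, lab p m ∧ lab q n ∧ r m n) {p q : X}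
    (h : (Γ ⊔ Λ).Reachable p q) :
    Γ.Reachable p q ∨ ∃ m n, lab p m ∧ lab q n ∧ r m n := by
  obtain ⟨w⟩ := h
  induction w with
  | nil => exact .inl .rfl
  | @cons p x q hadj _ ih =>
    obtain hΓ | hΛ' := hadj
    · obtain hreach | ⟨m, n, hx, hq, hr⟩ := ih
      · exact .inl (hΓ.reachable.trans hreach)
      · exact .inr ⟨m, n, hlab hΓ.symm hx, hq, hr⟩
    · obtain ⟨k, l, hp, hx, hkl⟩ := hΛ hΛ'
      obtain hreach | ⟨m, n, hx', hq, hr⟩ := ih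
      · exact .inr ⟨k, l, hp, (reachable_iff_of_forall_adj (P := (lab · l)) hlab hreach).1 hx, hkl⟩
      · obtain rfl := hunique hx hx'
        exact .inr ⟨k, n, hp, hq, _root_.trans hkl hr⟩

theorem isTransitionSystem_sup_links {E : MarkedEdges G ι} {lab : V × V → ℕ → Prop}
    {t : (ι → Bool) × List ℕ} (hB : IsTransitionSystemOn G S B) (ht : t ∈ D.states)
    (hcover : ∀ x y, G.Adj x y → (x ∈ S ∧ y ∈ S) ∨ ∃ e, E.Joins e x y)
    (hleft : ∀ e s, lab (E.left e s) (D.left e s))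
    (hright : ∀ e s, lab (E.right e s) (D.right e s))
    (hlab : ∀ {p q n}, B.Adj p q → lab p n → lab q n)
    (hunique : ∀ {p m n}, lab p m → lab p n → m = n)
    (hsame : ∀ {k l x a b}, SameClass t.2 k l → lab (x, a) k → lab (x, b) l → a = b) :
    IsTransitionSystem G (B ⊔ E.links t.1) where
  le_cornerGraph := sup_le hB.le_cornerGraph
    (MarkedEdges.links_le_of_forall_adj fun _ _ => MarkedEdges.cornerGraph_adj_left_right _)
  mem_of_adj _ := trivial
  exists_adj {x y a} _ _ hxy ha hay := by
    obtain ⟨hx, hy⟩ | ⟨e, he⟩ := hcover x y hxy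
    · obtain ⟨b, hb⟩ := hB.exists_adj hx hy hxy ha hay
      exact ⟨b, .inl hb⟩
    · obtain ⟨b, hb⟩ := MarkedEdges.exists_links_adj (γ := t.1) he ha hay
      exact ⟨b, .inr hb⟩
  eq_of_reachable {x a b} h := by
    have : IsTrans ℕ (SameClass t.2) :=
      ⟨fun _ _ _ => (Gluing.isSeparated_of_mem_states ht).sameClass_trans⟩
    have sameClass_of_adj : ∀ {p q}, (E.links t.1).Adj p q →
        ∃ m n, lab p m ∧ lab q n ∧ SameClass t.2 m n := by
      intro p q h
      obtain ⟨e, s, ⟨rfl, rfl⟩ | ⟨rfl, rfl⟩⟩ := MarkedEdges.links_adj_cases h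
      · exact ⟨_, _, hleft e s, hright e _, Gluing.sameClass_of_mem_states ht e s⟩
      · exact ⟨_, _, hright e _, hleft e s, (Gluing.sameClass_of_mem_states ht e s).symm⟩
    obtain hreach | ⟨m, n, hm, hn, hmn⟩ :=
      reachable_sup_cases (lab := lab) (r := SameClass t.2) hlab
        hunique sameClass_of_adj h
    exacts [hB.eq_of_reachable hreach, hsame hmn hm hn]

end Labels

end MarkedEdges

section Pentagons

variable {V W : Type*} {G : SimpleGraph V} {H : SimpleGraph W} {v u : Fin 5 → V}
  {B : SimpleGraph (V × V)}

theorem IsCubic.range_eq_neighborSet (hH : IsCubic H) {x : W} {f : Fin 3 → W}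
    (hf : Function.Injective f) (hadj : ∀ k, H.Adj x (f k)) : Set.range f = H.neighborSet x := by
  refine Set.eq_of_subset_of_ncard_le (Set.range_subset_iff.2 hadj) ?_
    (Set.finite_of_ncard_ne_zero (by rw [hH]; decide))
  rw [hH, ← Nat.card_coe_set_eq, Nat.card_range_of_injective hf, Nat.card_fin]

theorem isSides_side {x : W} {f : Fin 3 → W} (hf : Function.Injective f)
    (hrange : Set.range f = H.neighborSet x) (k : Fin 3) :
    IsSides H x (f k) fun s => f (side k s) := by
  refine ⟨fun s _ => ?_, fun s _ t _ h => ?_, fun a ⟨ha, hne⟩ => ?_⟩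
  · have side_ne : ∀ k s, side k s ≠ k := by decide
    exact ⟨hrange ▸ Set.mem_range_self _, fun h => side_ne k s (hf h)⟩
  · have side_inj : ∀ k s t, side k s = side k t → s = t := by decide
    exact side_inj k s t (hf h)
  · obtain ⟨l, rfl⟩ := hrange ▸ ha
    have exists_side : ∀ k l, l ≠ k → ∃ s, side k s = l := by decide
    obtain ⟨s, rfl⟩ := exists_side k l fun h => hne (congrArg f h)
    exact ⟨s, trivial, rfl⟩

theorem exists_isSides (hH : IsCubic H) {x y : W} (hxy : H.Adj x y) : ∃ X, IsSides H x y X := by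
  obtain ⟨b, c, hb, hc, hbc, hN⟩ :=
    exists_eq_insert_pair_of_ncard_eq_three (hH x) (show y ∈ H.neighborSet x from hxy)
  refine ⟨fun s => bif s then b else c, ?_, ?_, ?_⟩
  · rintro (_ | _) - <;> simp [hN, hb.symm, hc.symm]
  · rintro (_ | _) - (_ | _) - h <;> simp_all
  · rintro a ⟨ha, hay⟩
    rw [hN] at ha
    obtain rfl | rfl | rfl := ha
    exacts [absurd rfl hay, ⟨true, trivial, rfl⟩, ⟨false, trivial, rfl⟩]

theorem IsSides.comp_beq {x y : W} {X : Bool → W} (hX : IsSides H x y X) (b : Bool) :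
    IsSides H x y fun s => X (s == b) := by
  have hbij : Function.Bijective fun s : Bool => s == b := by cases b <;> decide
  exact hX.comp hbij.bijOn_univ

/-- `v` is a 5-cycle of a cubic graph, with third neighbours `u` that are distinct and do not lie on
the cycle. -/
structure IsPentagon (G : SimpleGraph V) (v u : Fin 5 → V) : Prop where
  cubic : IsCubic G
  v_injective : Function.Injective v
  adj_succ : ∀ j, G.Adj (v j) (v (j + 1))
  adj_third : ∀ j, G.Adj (v j) (u j)
  u_injective : Function.Injective u
  u_ne_v : ∀ j k, u j ≠ v k

/-- The vertices outside a pentagon. -/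
def outside (v : Fin 5 → V) : Set V := {x | ∀ j, x ≠ v j}

/-- The neighbours of the `j`-th vertex of a pentagon, in the order of `innerLabel`. -/
def pentagonNbr (v u : Fin 5 → V) (j : Fin 5) : Fin 3 → V := ![v (j + 4), v (j + 1), u j]

theorem notMem_outside (j : Fin 5) : v j ∉ outside v := fun h => h j rfl

theorem exists_eq_of_notMem_outside {x : V} (hx : x ∉ outside v) : ∃ j, x = v j := by
  simpa [outside] using hx

/-- The two sides of the terminal edges `v j - u j` are enumerated by `a`, such that the `j`-th
path of the transition system `B` leads from the corner on the side `true` of the `j`-th terminal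
edge to the corner on the side `false` of the `π.symm j`-th one. -/
structure IsPathLabelling (G : SimpleGraph V) (v u : Fin 5 → V) (B : SimpleGraph (V × V))
    (a : Fin 5 → Bool → V) (π : Equiv.Perm (Fin 5)) : Prop where
  isSides : ∀ j, IsSides G (u j) (v j) (a j)
  apply_ne : ∀ j, π j ≠ j
  reachable_iff : ∀ {j k s t},
    B.Reachable (u j, a j s) (u k, a k t) ↔ path π j s = path π k t

namespace IsPentagon

theorem pentagonNbr_injective (hP : IsPentagon G v u) (j : Fin 5) :
    Function.Injective (pentagonNbr v u j) := by
  have hne : v (j + 4) ≠ v (j + 1) := fun h => by simpa using hP.v_injective h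
  intro k l h
  fin_cases k <;> fin_cases l <;>
    simp_all [pentagonNbr, hP.u_ne_v, (hP.u_ne_v _ _).symm, hne.symm]

theorem adj_pred (hP : IsPentagon G v u) (j : Fin 5) : G.Adj (v j) (v (j + 4)) := by
  have h := hP.adj_succ (j + 4)
  rw [add_assoc, show (4 + 1 : Fin 5) = 0 from rfl, add_zero] at h
  exact h.symm

theorem range_pentagonNbr (hP : IsPentagon G v u) (j : Fin 5) :
    Set.range (pentagonNbr v u j) = G.neighborSet (v j) := by
  refine hP.cubic.range_eq_neighborSet (hP.pentagonNbr_injective j) fun k => ?_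
  fin_cases k
  exacts [hP.adj_pred j, hP.adj_succ j, hP.adj_third j]

theorem u_mem_outside (hP : IsPentagon G v u) (j : Fin 5) : u j ∈ outside v := hP.u_ne_v j

theorem eq_u_of_adj (hP : IsPentagon G v u) {x : V} {j : Fin 5} (hx : x ∈ outside v)
    (h : G.Adj x (v j)) : x = u j := by
  obtain ⟨k, rfl⟩ : x ∈ Set.range (pentagonNbr v u j) := hP.range_pentagonNbr j ▸ h.symm
  fin_cases k
  exacts [absurd rfl (hx _), absurd rfl (hx _), rfl]

theorem subsingleton_neighborSet_diff (hP : IsPentagon G v u) :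
    ∀ x ∈ outside v, (G.neighborSet x \ outside v).Subsingleton := by
  rintro x hx a ⟨ha, haS⟩ b ⟨hb, hbS⟩
  obtain ⟨j, rfl⟩ := exists_eq_of_notMem_outside haS
  obtain ⟨k, rfl⟩ := exists_eq_of_notMem_outside hbS
  rw [hP.u_injective ((hP.eq_u_of_adj hx ha).symm.trans (hP.eq_u_of_adj hx hb))]

theorem isTerminal_iff (hP : IsPentagon G v u) {a : Fin 5 → Bool → V}
    (ha : ∀ j, IsSides G (u j) (v j) (a j)) {p : V × V} :
    IsTerminal G (outside v) p ↔ ∃ x : Fin 5 × Bool, (u x.1, a x.1 x.2) = p := by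
  constructor
  · obtain ⟨x, b⟩ := p
    rintro ⟨hx, hb, w, hw, hxw, hwb⟩
    obtain ⟨j, rfl⟩ := exists_eq_of_notMem_outside hw
    obtain rfl := hP.eq_u_of_adj hx hxw
    obtain ⟨s, rfl⟩ := (ha j).exists_eq hb hwb.symm
    exact ⟨(j, s), rfl⟩
  · rintro ⟨⟨j, s⟩, rfl⟩
    exact ⟨hP.u_mem_outside j, ((ha j).adj s).1, v j, notMem_outside j, (hP.adj_third j).symm,
      ((ha j).adj s).2.symm⟩

theorem exists_isPathLabelling [Finite V] (hP : IsPentagon G v u)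
    (hB : IsTransitionSystemOn G (outside v) B) : ∃ a π, IsPathLabelling G v u B a π := by
  choose a ha using fun j => exists_isSides hP.cubic (hP.adj_third j).symm
  let corner : Fin 5 × Bool → V × V := fun x => (u x.1, a x.1 x.2)
  have hinj : Function.Injective corner := by
    rintro ⟨j, s⟩ ⟨k, t⟩ h
    obtain rfl := hP.u_injective (congrArg Prod.fst h)
    exact congrArg (Prod.mk j) ((ha j).injective (congrArg Prod.snd h))
  let r : Fin 5 × Bool → Fin 5 × Bool → Prop := fun x y => B.Reachable (corner x) (corner y)
  have hr : Equivalence r := ⟨fun _ => .rfl, .symm, .trans⟩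
  have hpair : ∀ x, ∃ y, y ≠ x ∧ ∀ z, r x z ↔ z = x ∨ z = y := by
    intro x
    obtain ⟨q, ⟨hne, hreach, hq⟩, hunique⟩ := hB.existsUnique_isTerminal hP.cubic
      hP.subsingleton_neighborSet_diff ((hP.isTerminal_iff ha).2 ⟨x, rfl⟩)
    obtain ⟨y, rfl⟩ := (hP.isTerminal_iff ha).1 hq
    refine ⟨y, fun h => hne (congrArg corner h), fun z => ⟨fun hz => ?_, ?_⟩⟩
    · exact or_iff_not_imp_left.2 fun hzx => hinj
        (hunique _ ⟨fun h => hzx (hinj h), hz, (hP.isTerminal_iff ha).2 ⟨z, rfl⟩⟩)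
    · rintro (rfl | rfl)
      exacts [.rfl, hreach]
  have hne : ∀ j s, ¬ r (j, s) (j, !s) := fun j s h =>
    Bool.self_ne_not s ((ha j).injective (hB.eq_of_reachable h))
  obtain ⟨f, π, hπ, hiff⟩ := exists_derangement_of_pairing hr hpair hne
  exact ⟨fun j s => a j (s == f j), π, fun j => (ha j).comp_beq _, hπ, hiff _ _ _ _⟩

end IsPentagon

end Pentagons

section Reductions

variable {V W : Type*} {G : SimpleGraph V} {H : SimpleGraph W} {S : Set V} {φ : V → W}
  {v u : Fin 5 → V} {i : Fin 5}

theorem IsCoveringOn.isSides (hφ : IsCoveringOn φ G S H) {x y : V} {X : Bool → V} (hx : x ∈ S)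
    (hxy : G.Adj x y) (hX : IsSides G x y X) : IsSides H (φ x) (φ y) fun s => φ (X s) :=
  ((hφ x hx).sdiff_singleton hxy).comp hX

theorem eq_or_eq_or_exists_eq_hub (i j : Fin 5) : j = i ∨ j = i + 1 ∨ ∃ k, j = hub i k := by
  revert i j
  decide

theorem hub_injective (i : Fin 5) : Function.Injective (hub i) := by
  revert i
  decide

/-- The `i`-th reduction of `G` at the pentagon `v` with third neighbours `u`. Its vertices are
those outside the pentagon and one new vertex. -/
def reduction (G : SimpleGraph V) (v u : Fin 5 → V) (i : Fin 5) :
    SimpleGraph (outside v ⊕ Unit) :=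
  SimpleGraph.fromRel fun
    | .inl x, .inl y => G.Adj x y ∨ (x = u i ∧ y = u (i + 1))
    | .inl x, .inr _ => ∃ k, x = u (hub i k)
    | .inr _, _ => False

theorem reduction_adj_inl_inr {x : outside v} {w : Unit} :
    (reduction G v u i).Adj (.inl x) (.inr w) ↔ ∃ k, x = u (hub i k) := by
  simp [reduction]

namespace IsPentagon

theorem reduction_adj_inl_inl (hP : IsPentagon G v u) {x y : outside v} :
    (reduction G v u i).Adj (.inl x) (.inl y) ↔
      G.Adj x y ∨ (x = u i ∧ y = u (i + 1)) ∨ (x = u (i + 1) ∧ y = u i) := by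
  have hne : u i ≠ u (i + 1) := fun h => by simpa using hP.u_injective h
  simp only [reduction, SimpleGraph.fromRel_adj, ne_eq, Sum.inl.injEq, G.adj_comm (y : V) x]
  constructor
  · tauto
  · intro h
    refine ⟨?_, by tauto⟩
    rintro rfl
    obtain h | ⟨h, h'⟩ | ⟨h, h'⟩ := h
    exacts [G.irrefl h, hne (h.symm.trans h'), hne (h'.symm.trans h)]

theorem reduction_adj_iff (hP : IsPentagon G v u) (p q : outside v ⊕ Unit) :
    (reduction G v u i).Adj p q ↔
      (∃ x y, p = Sum.inl x ∧ q = Sum.inl y ∧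
        (G.Adj x.1 y.1 ∨ (x.1 = u i ∧ y.1 = u (i + 1)) ∨ (x.1 = u (i + 1) ∧ y.1 = u i))) ∨
      (∃ x, p = Sum.inl x ∧ q = Sum.inr () ∧
        (x.1 = u (i + 2) ∨ x.1 = u (i + 3) ∨ x.1 = u (i + 4))) ∨
      (∃ x, p = Sum.inr () ∧ q = Sum.inl x ∧
        (x.1 = u (i + 2) ∨ x.1 = u (i + 3) ∨ x.1 = u (i + 4))) := by
  have exists_hub : ∀ x : V,
      (∃ k, x = u (hub i k)) ↔ x = u (i + 2) ∨ x = u (i + 3) ∨ x = u (i + 4) := fun x => by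
    simp [Fin.exists_fin_succ, hub]
  obtain x | ⟨⟩ := p <;> obtain y | ⟨⟩ := q
  · simp [hP.reduction_adj_inl_inl]
  · simp [reduction_adj_inl_inr, exists_hub]
  · rw [SimpleGraph.adj_comm]
    simp [reduction_adj_inl_inr, exists_hub]
  · simp

/-- The third neighbour of `v j`, as a vertex outside the pentagon. -/
def third (hP : IsPentagon G v u) (j : Fin 5) : outside v := ⟨u j, hP.u_mem_outside j⟩

theorem third_injective (hP : IsPentagon G v u) : Function.Injective hP.third :=
  fun _ _ h => hP.u_injective (congrArg Subtype.val h)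

open scoped Classical in
/-- The covering from `G` to its `i`-th reduction: at `u j`, the edge to `v j` is carried to the
edge that replaces it. -/
noncomputable def toReduction (hP : IsPentagon G v u) (i : Fin 5) (x : V) : outside v ⊕ Unit :=
  if hx : x ∈ outside v then .inl ⟨x, hx⟩
  else if x = v i then .inl (hP.third (i + 1))
  else if x = v (i + 1) then .inl (hP.third i)
  else .inr ()

theorem toReduction_coe (hP : IsPentagon G v u) (x : outside v) :
    hP.toReduction i x = .inl x := dif_pos x.2

theorem toReduction_u (hP : IsPentagon G v u) (j : Fin 5) :
    hP.toReduction i (u j) = .inl (hP.third j) := hP.toReduction_coe (hP.third j)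

theorem toReduction_v_self (hP : IsPentagon G v u) :
    hP.toReduction i (v i) = .inl (hP.third (i + 1)) := by
  rw [toReduction, dif_neg (notMem_outside i), if_pos rfl]

theorem toReduction_v_succ (hP : IsPentagon G v u) :
    hP.toReduction i (v (i + 1)) = .inl (hP.third i) := by
  have hne : v (i + 1) ≠ v i := fun h => by simpa using hP.v_injective h
  rw [toReduction, dif_neg (notMem_outside _), if_neg hne, if_pos rfl]

theorem toReduction_v_hub (hP : IsPentagon G v u) (k : Fin 3) :
    hP.toReduction i (v (hub i k)) = .inr () := by
  have hub_ne : ∀ i k, hub i k ≠ i ∧ hub i k ≠ i + 1 := by decide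
  rw [toReduction, dif_neg (notMem_outside _), if_neg fun h => (hub_ne i k).1 (hP.v_injective h),
    if_neg fun h => (hub_ne i k).2 (hP.v_injective h)]

theorem reduction_adj_inl_iff (hP : IsPentagon G v u) {x : outside v} {q : outside v ⊕ Unit} :
    (reduction G v u i).Adj (.inl x) q ↔ ∃ y, G.Adj x y ∧ hP.toReduction i y = q := by
  constructor
  · obtain y | ⟨⟩ := q
    · rw [hP.reduction_adj_inl_inl]
      rintro (hadj | ⟨hx, hy⟩ | ⟨hx, hy⟩)
      · exact ⟨y, hadj, hP.toReduction_coe y⟩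
      · exact ⟨v i, hx ▸ (hP.adj_third i).symm,
          hP.toReduction_v_self.trans (congrArg Sum.inl (Subtype.ext hy.symm))⟩
      · exact ⟨v (i + 1), hx ▸ (hP.adj_third _).symm,
          hP.toReduction_v_succ.trans (congrArg Sum.inl (Subtype.ext hy.symm))⟩
    · rw [reduction_adj_inl_inr]
      rintro ⟨k, hx⟩
      exact ⟨v (hub i k), hx ▸ (hP.adj_third _).symm, hP.toReduction_v_hub k⟩
  · rintro ⟨y, hxy, rfl⟩
    by_cases hy : y ∈ outside v
    · rw [hP.toReduction_coe ⟨y, hy⟩, hP.reduction_adj_inl_inl]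
      exact .inl hxy
    · obtain ⟨j, rfl⟩ := exists_eq_of_notMem_outside hy
      have hx := hP.eq_u_of_adj x.2 hxy
      obtain rfl | rfl | ⟨k, rfl⟩ := eq_or_eq_or_exists_eq_hub i j
      · rw [hP.toReduction_v_self, hP.reduction_adj_inl_inl]
        exact .inr (.inl ⟨hx, rfl⟩)
      · rw [hP.toReduction_v_succ, hP.reduction_adj_inl_inl]
        exact .inr (.inr ⟨hx, rfl⟩)
      · rw [hP.toReduction_v_hub, reduction_adj_inl_inr]
        exact ⟨k, hx⟩

theorem toReduction_v_ne (hP : IsPentagon G v u) (hi : ¬ G.Adj (u i) (u (i + 1))) {j : Fin 5}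
    {y : V} (hy : y ∈ outside v) (hadj : G.Adj (u j) y) :
    hP.toReduction i (v j) ≠ hP.toReduction i y := by
  rw [hP.toReduction_coe ⟨y, hy⟩]
  obtain rfl | rfl | ⟨k, rfl⟩ := eq_or_eq_or_exists_eq_hub i j
  · rw [hP.toReduction_v_self]
    rintro ⟨⟩
    exact hi hadj
  · rw [hP.toReduction_v_succ]
    rintro ⟨⟩
    exact hi hadj.symm
  · rw [hP.toReduction_v_hub]
    exact Sum.inr_ne_inl

theorem isCoveringOn_toReduction (hP : IsPentagon G v u) (hi : ¬ G.Adj (u i) (u (i + 1))) :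
    IsCoveringOn (hP.toReduction i) G (outside v) (reduction G v u i) := by
  intro x hx
  rw [hP.toReduction_coe ⟨x, hx⟩]
  refine ⟨fun y hy => hP.reduction_adj_inl_iff.2 ⟨y, hy, rfl⟩, fun y hy z hz h => ?_,
    fun q hq => hP.reduction_adj_inl_iff.1 hq⟩
  by_cases hyS : y ∈ outside v <;> by_cases hzS : z ∈ outside v
  · rw [hP.toReduction_coe ⟨y, hyS⟩, hP.toReduction_coe ⟨z, hzS⟩] at h
    exact congrArg Subtype.val (Sum.inl_injective h)
  · obtain ⟨j, rfl⟩ := exists_eq_of_notMem_outside hzS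
    obtain rfl := hP.eq_u_of_adj hx hz
    exact absurd h.symm (hP.toReduction_v_ne hi hyS hy)
  · obtain ⟨j, rfl⟩ := exists_eq_of_notMem_outside hyS
    obtain rfl := hP.eq_u_of_adj hx hy
    exact absurd h (hP.toReduction_v_ne hi hzS hz)
  · exact hP.subsingleton_neighborSet_diff x hx ⟨hy, hyS⟩ ⟨hz, hzS⟩

/-- The neighbours of the new vertex of the `i`-th reduction. -/
def hubNbr (hP : IsPentagon G v u) (i : Fin 5) (k : Fin 3) : outside v ⊕ Unit :=
  .inl (hP.third (hub i k))

theorem hubNbr_injective (hP : IsPentagon G v u) : Function.Injective (hP.hubNbr i) :=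
  Sum.inl_injective.comp (hP.third_injective.comp (hub_injective i))

theorem range_hubNbr (hP : IsPentagon G v u) :
    Set.range (hP.hubNbr i) = (reduction G v u i).neighborSet (.inr ()) := by
  ext (x | ⟨⟩)
  · rw [SimpleGraph.mem_neighborSet, SimpleGraph.adj_comm, reduction_adj_inl_inr]
    simp only [Set.mem_range, hubNbr, third, Sum.inl.injEq, Subtype.ext_iff, eq_comm]
  · simp [hubNbr]

theorem isCubic_reduction (hP : IsPentagon G v u) (hi : ¬ G.Adj (u i) (u (i + 1))) :
    IsCubic (reduction G v u i) := by
  rintro (x | ⟨⟩)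
  · rw [← hP.toReduction_coe x, ← (hP.isCoveringOn_toReduction hi x x.2).ncard_eq, hP.cubic]
  · rw [← hP.range_hubNbr, ← Nat.card_coe_set_eq,
      Nat.card_range_of_injective hP.hubNbr_injective, Nat.card_fin]

end IsPentagon

end Reductions

section PathLabels

variable {V W κ : Type*} {G : SimpleGraph V} {v u : Fin 5 → V} {i : Fin 5}
  {B M M' : SimpleGraph (V × V)} {a : Fin 5 → Bool → V} {π : Equiv.Perm (Fin 5)}

/-- The label `n` of a corner: corners on the image under `φ` of the component of `B` through
`terminal j` are labelled `j < 5`, and the corner `inner k` is labelled `code k`. -/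
def HasLabel (φ : V → W) (B : SimpleGraph (V × V)) (terminal : Fin 5 → V × V) (inner : κ → W × W)
    (code : κ → ℕ) (p : W × W) (n : ℕ) : Prop :=
  (∃ j q, n = (j : Fin 5).val ∧ p = Prod.map φ φ q ∧ B.Reachable (terminal j) q) ∨
    ∃ k, n = code k ∧ p = inner k

/-- No two distinct corners at the same vertex lie on the paths `k` and `l` of `B`. -/
def ArePathsCompatible (B : SimpleGraph (V × V)) (terminal : Fin 5 → V × V) (k l : Fin 5) : Prop :=
  ∀ ⦃x y y'⦄, B.Reachable (terminal k) (x, y) → B.Reachable (terminal l) (x, y') → y = y'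

namespace IsPathLabelling

theorem reachable_path (ha : IsPathLabelling G v u B a π) (j : Fin 5) (s : Bool) :
    B.Reachable (u (path π j s), a (path π j s) true) (u j, a j s) :=
  ha.reachable_iff.2 rfl

theorem hasLabel_path (ha : IsPathLabelling G v u B a π) (φ : V → W) (inner : κ → W × W)
    (code : κ → ℕ) (j : Fin 5) (s : Bool) :
    HasLabel φ B (fun j => (u j, a j true)) inner code (φ (u j), φ (a j s))
      (path π j s : Fin 5) :=
  .inl ⟨_, _, rfl, rfl, ha.reachable_path j s⟩

end IsPathLabelling

end PathLabels

section ReducedFibres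

variable {V : Type*} {G : SimpleGraph V} {v u : Fin 5 → V} {i : Fin 5} {B : SimpleGraph (V × V)}
  {a : Fin 5 → Bool → V} {π : Equiv.Perm (Fin 5)}

namespace IsPentagon

theorem mem_outside_of_reachable (hP : IsPentagon G v u)
    (hB : IsTransitionSystemOn G (outside v) B) {j : Fin 5} {y : V} {q : V × V}
    (h : B.Reachable (u j, y) q) : q.1 ∈ outside v :=
  (hB.mem_iff_of_reachable h).1 (hP.u_mem_outside j)

theorem isSides_toReduction (hP : IsPentagon G v u) (hi : ¬ G.Adj (u i) (u (i + 1)))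
    (ha : ∀ j, IsSides G (u j) (v j) (a j)) (j : Fin 5) :
    IsSides (reduction G v u i) (hP.toReduction i (u j)) (hP.toReduction i (v j))
      fun s => hP.toReduction i (a j s) :=
  (hP.isCoveringOn_toReduction hi).isSides (hP.u_mem_outside j) (hP.adj_third j).symm (ha j)

/-- The edges of the `i`-th reduction that are not edges of `G`, in the order of
`reducedGluing`. -/
noncomputable def reducedEdges (hP : IsPentagon G v u) (hi : ¬ G.Adj (u i) (u (i + 1)))
    (ha : ∀ j, IsSides G (u j) (v j) (a j)) :
    MarkedEdges (reduction G v u i) (Option (Fin 3)) where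
  fst e := hP.toReduction i (u (e.elim i (hub i)))
  snd e := e.elim (hP.toReduction i (u (i + 1))) fun _ => .inr ()
  fstSide e s := hP.toReduction i (a (e.elim i (hub i)) s)
  sndSide e s := e.elim (hP.toReduction i (a (i + 1) s)) fun k => hP.hubNbr i (side k s)
  adj := by
    rintro (_ | k) <;> simp only [Option.elim_none, Option.elim_some, hP.toReduction_u]
    · exact hP.reduction_adj_inl_inl.2 (.inr (.inl ⟨rfl, rfl⟩))
    · exact reduction_adj_inl_inr.2 ⟨k, rfl⟩
  isSides_fst := by
    rintro (_ | k)
    · simpa only [Option.elim_none, hP.toReduction_v_self, hP.toReduction_u]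
        using hP.isSides_toReduction hi ha i
    · simpa only [Option.elim_some, hP.toReduction_v_hub]
        using hP.isSides_toReduction hi ha (hub i k)
  isSides_snd := by
    rintro (_ | k)
    · simpa only [Option.elim_none, hP.toReduction_v_succ, hP.toReduction_u]
        using hP.isSides_toReduction hi ha (i + 1)
    · simpa only [Option.elim_some, hubNbr, hP.toReduction_u]
        using isSides_side hP.hubNbr_injective hP.range_hubNbr k

theorem reduction_adj_cases (hP : IsPentagon G v u) (hi : ¬ G.Adj (u i) (u (i + 1)))
    (ha : ∀ j, IsSides G (u j) (v j) (a j)) (p q : outside v ⊕ Unit)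
    (h : (reduction G v u i).Adj p q) :
    (∃ x ∈ outside v, ∃ y ∈ outside v,
      G.Adj x y ∧ hP.toReduction i x = p ∧ hP.toReduction i y = q) ∨
        ∃ e, (hP.reducedEdges hi ha).Joins e p q := by
  have inl_eq : ∀ {x : outside v} {j}, x = u j → .inl x = hP.toReduction i (u j) := fun h =>
    (congrArg Sum.inl (Subtype.ext h)).trans (hP.toReduction_u _).symm
  obtain x | ⟨⟩ := p <;> obtain y | ⟨⟩ := q
  · obtain h | ⟨hx, hy⟩ | ⟨hx, hy⟩ := hP.reduction_adj_inl_inl.1 h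
    · exact .inl ⟨x, x.2, y, y.2, h, hP.toReduction_coe x, hP.toReduction_coe y⟩
    · exact .inr ⟨none, .inl ⟨inl_eq hx, inl_eq hy⟩⟩
    · exact .inr ⟨none, .inr ⟨inl_eq hx, inl_eq hy⟩⟩
  · obtain ⟨k, hx⟩ := reduction_adj_inl_inr.1 h
    exact .inr ⟨some k, .inl ⟨inl_eq hx, rfl⟩⟩
  · obtain ⟨k, hy⟩ := reduction_adj_inl_inr.1 h.symm
    exact .inr ⟨some k, .inr ⟨rfl, inl_eq hy⟩⟩
  · exact absurd h (SimpleGraph.irrefl _)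

/-- The labels of `reducedGluing` for the corners of the `i`-th reduction. -/
def HasReducedLabel (hP : IsPentagon G v u) (i : Fin 5) (B : SimpleGraph (V × V))
    (a : Fin 5 → Bool → V) : (outside v ⊕ Unit) × (outside v ⊕ Unit) → ℕ → Prop :=
  HasLabel (hP.toReduction i) B (fun j => (u j, a j true)) (fun k => (.inr (), hP.hubNbr i k))
    hubLabel

theorem reachable_of_hasReducedLabel (hP : IsPentagon G v u)
    {M : SimpleGraph ((outside v ⊕ Unit) × (outside v ⊕ Unit))}
    (hpull : pullback (hP.toReduction i) G (outside v) M = B)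
    {p q : (outside v ⊕ Unit) × (outside v ⊕ Unit)} {n : ℕ} (hp : hP.HasReducedLabel i B a p n)
    (hq : hP.HasReducedLabel i B a q n) : M.Reachable p q := by
  subst hpull
  obtain ⟨j, p, rfl, rfl, hp⟩ | ⟨k, rfl, rfl⟩ := hp <;>
    obtain ⟨l, q, hl, rfl, hq⟩ | ⟨l, hl, rfl⟩ := hq
  · obtain rfl := Fin.val_injective hl
    exact reachable_map_of_pullback (hp.symm.trans hq)
  · simp only [hubLabel] at hl
    omega
  · simp only [hubLabel] at hl
    omega
  · obtain rfl := Fin.val_injective (Nat.add_left_cancel hl)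
    exact .rfl

theorem exists_hasReducedLabel_of_mem_apart (hP : IsPentagon G v u)
    (hi : ¬ G.Adj (u i) (u (i + 1))) (ha : IsPathLabelling G v u B a π) {m : ℕ}
    (hm : m ∈ (reducedGluing π i).apart) :
    ∃ k l x y z, m = pairMask k l ∧ y ≠ z ∧ hP.HasReducedLabel i B a (x, y) k ∧
      hP.HasReducedLabel i B a (x, z) l := by
  have hub_labels : ∀ k l : Fin 3, k ≠ l → ∃ x y z, y ≠ z ∧
      hP.HasReducedLabel i B a (x, y) (hubLabel k) ∧ hP.HasReducedLabel i B a (x, z) (hubLabel l) :=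
    fun k l hkl => ⟨.inr (), hP.hubNbr i k, hP.hubNbr i l, hP.hubNbr_injective.ne hkl,
      .inr ⟨k, rfl, rfl⟩, .inr ⟨l, rfl, rfl⟩⟩
  simp only [reducedGluing, List.mem_cons, List.mem_map] at hm
  obtain rfl | rfl | rfl | ⟨j, -, rfl⟩ := hm
  · exact ⟨_, _, (hub_labels 0 1 (by decide)).imp fun _ => .imp fun _ => .imp fun _ => .intro rfl⟩
  · exact ⟨_, _, (hub_labels 1 2 (by decide)).imp fun _ => .imp fun _ => .imp fun _ => .intro rfl⟩
  · exact ⟨_, _, (hub_labels 2 0 (by decide)).imp fun _ => .imp fun _ => .imp fun _ => .intro rfl⟩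
  · exact ⟨_, _, _, _, _, rfl,
      (hP.isSides_toReduction hi ha.isSides j).injective.ne Bool.true_eq_false.mp,
      ha.hasLabel_path _ _ _ j true, ha.hasLabel_path _ _ _ j false⟩

theorem exists_mem_states_reducedGluing (hP : IsPentagon G v u) (hi : ¬ G.Adj (u i) (u (i + 1)))
    {M : SimpleGraph ((outside v ⊕ Unit) × (outside v ⊕ Unit))}
    (hM : IsTransitionSystem (reduction G v u i) M)
    (hpull : pullback (hP.toReduction i) G (outside v) M = B) (ha : IsPathLabelling G v u B a π)
    {γ : Option (Fin 3) → Bool} (hγ : ∀ e s, M.Adj ((hP.reducedEdges hi ha.isSides).left e s)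
      ((hP.reducedEdges hi ha.isSides).right e (s == γ e))) :
    ∃ ds, (γ, ds) ∈ (reducedGluing π i).states ∧ ∀ k l : Fin 5, SameClass ds k l →
      ArePathsCompatible B (fun j => (u j, a j true)) k l := by
  have hφ := hP.isCoveringOn_toReduction hi
  have hB : IsTransitionSystemOn G (outside v) B := hpull ▸ hφ.isTransitionSystemOn_pullback hM
  have label_path : ∀ j s, hP.HasReducedLabel i B a
      (hP.toReduction i (u j), hP.toReduction i (a j s)) (path π j s : Fin 5) :=
    ha.hasLabel_path _ _ _
  obtain ⟨ds, hds, hreach⟩ := exists_mem_states_of_isTransitionSystem (D := reducedGluing π i)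
    (lab := hP.HasReducedLabel i B a) hM hγ
    (by rintro (_ | k) s; exacts [label_path _ s, label_path _ s])
    (by rintro (_ | k) s; exacts [label_path _ s, .inr ⟨_, rfl, rfl⟩])
    (hP.reachable_of_hasReducedLabel hpull)
    fun m hm => hP.exists_hasReducedLabel_of_mem_apart hi ha hm
  refine ⟨ds, hds, fun k l hkl x y z hy hz => ?_⟩
  have adj_of_reachable : ∀ {j q}, B.Reachable (u j, a j true) q → G.Adj q.1 q.2 := fun h =>
    (hB.isCorner_iff_of_reachable h).1 ((ha.isSides _).adj true).1
  have hreach' := hreach hkl (.inl ⟨k, _, rfl, rfl, hy⟩) (.inl ⟨l, _, rfl, rfl, hz⟩)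
  exact (hφ x (hP.mem_outside_of_reachable hB hy)).injOn (adj_of_reachable hy)
    (adj_of_reachable hz) (hM.eq_of_reachable hreach')

end IsPentagon

end ReducedFibres

section PentagonFibres

variable {V : Type*} {G : SimpleGraph V} {v u : Fin 5 → V} {B : SimpleGraph (V × V)}
  {a : Fin 5 → Bool → V} {π : Equiv.Perm (Fin 5)}

theorem pairMask_mem_apart_pentagonGluing (π : Fin 5 → Fin 5) (j : Fin 5) (k : Fin 3) :
    pairMask (innerLabel j k) (innerLabel j (k + 1)) ∈ (pentagonGluing π).apart := by
  refine List.mem_flatMap.2 ⟨j, List.mem_finRange j, ?_⟩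
  fin_cases k <;> simp

theorem not_sameClass_innerLabel {t : (Fin 5 ⊕ Fin 5 → Bool) × List ℕ}
    (ht : t ∈ (pentagonGluing π).states) (j : Fin 5) {k l : Fin 3} (hkl : k ≠ l) :
    ¬ SameClass t.2 (innerLabel j k) (innerLabel j l) := by
  have not_succ : ∀ k, ¬ SameClass t.2 (innerLabel j k) (innerLabel j (k + 1)) := fun k =>
    (Gluing.isSeparated_of_mem_states ht).not_sameClass (pairMask_mem_apart_pentagonGluing π j k)
  have eq_succ : ∀ k l : Fin 3, k ≠ l → l = k + 1 ∨ k = l + 1 := by decide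
  obtain rfl | rfl := eq_succ k l hkl
  exacts [not_succ k, fun h => not_succ l h.symm]

namespace IsPentagon

/-- The edges of `G` at the pentagon, in the order of `pentagonGluing`. -/
def pentagonEdges (hP : IsPentagon G v u) (ha : ∀ j, IsSides G (u j) (v j) (a j)) :
    MarkedEdges G (Fin 5 ⊕ Fin 5) where
  fst := Sum.elim u v
  snd := Sum.elim v fun j => v (j + 1)
  fstSide e s := e.elim (fun j => a j s) fun j => pentagonNbr v u j (side 1 s)
  sndSide e s := e.elim (fun j => pentagonNbr v u j (side 2 s))
    fun j => pentagonNbr v u (j + 1) (side 0 s)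
  adj := by
    rintro (j | j)
    exacts [(hP.adj_third j).symm, hP.adj_succ j]
  isSides_fst := by
    rintro (j | j)
    exacts [ha j, isSides_side (hP.pentagonNbr_injective j) (hP.range_pentagonNbr j) 1]
  isSides_snd := by
    have h := fun j => isSides_side (hP.pentagonNbr_injective j) (hP.range_pentagonNbr j)
    have pred_succ : ∀ j : Fin 5, j + 1 + 4 = j := by decide
    rintro (j | j)
    · exact h j 2
    · simpa [pentagonNbr, pred_succ] using h (j + 1) 0

theorem adj_cases (hP : IsPentagon G v u) (ha : ∀ j, IsSides G (u j) (v j) (a j)) (x y : V)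
    (h : G.Adj x y) :
    (x ∈ outside v ∧ y ∈ outside v) ∨ ∃ e, (hP.pentagonEdges ha).Joins e x y := by
  have joins_of_eq : ∀ {j y}, G.Adj (v j) y → ∃ e, (hP.pentagonEdges ha).Joins e (v j) y := by
    intro j y h
    obtain ⟨k, rfl⟩ : y ∈ Set.range (pentagonNbr v u j) := hP.range_pentagonNbr j ▸ h
    have succ_pred : j + 4 + 1 = j := by rw [add_assoc, show (4 + 1 : Fin 5) = 0 from rfl, add_zero]
    fin_cases k
    · exact ⟨.inr (j + 4), .inr ⟨congrArg v succ_pred.symm, rfl⟩⟩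
    · exact ⟨.inr j, .inl ⟨rfl, rfl⟩⟩
    · exact ⟨.inl j, .inr ⟨rfl, rfl⟩⟩
  by_cases hx : x ∈ outside v
  · by_cases hy : y ∈ outside v
    · exact .inl ⟨hx, hy⟩
    · obtain ⟨j, rfl⟩ := exists_eq_of_notMem_outside hy
      exact .inr ((joins_of_eq h.symm).imp fun _ => Or.symm ∘ Or.imp And.symm And.symm)
  · obtain ⟨j, rfl⟩ := exists_eq_of_notMem_outside hx
    exact .inr (joins_of_eq h)

/-- The labels of `pentagonGluing` for the corners of `G`. -/
def HasPentagonLabel (v u : Fin 5 → V) (B : SimpleGraph (V × V)) (a : Fin 5 → Bool → V) :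
    V × V → ℕ → Prop :=
  HasLabel id B (fun j => (u j, a j true))
    (fun k : Fin 5 × Fin 3 => (v k.1, pentagonNbr v u k.1 k.2)) fun k => innerLabel k.1 k.2

theorem hasPentagonLabel_of_adj (hB : IsTransitionSystemOn G (outside v) B) {p q : V × V} {n : ℕ}
    (hadj : B.Adj p q) (hp : HasPentagonLabel v u B a p n) : HasPentagonLabel v u B a q n := by
  obtain ⟨j, p, rfl, rfl, hp⟩ | ⟨k, rfl, rfl⟩ := hp
  · exact .inl ⟨j, q, rfl, rfl, hp.trans hadj.reachable⟩
  · exact absurd (hB.mem_of_adj hadj) (notMem_outside _)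

theorem hasPentagonLabel_unique (hP : IsPentagon G v u)
    (hB : IsTransitionSystemOn G (outside v) B) (ha : IsPathLabelling G v u B a π) {p : V × V}
    {m n : ℕ} (hm : HasPentagonLabel v u B a p m) (hn : HasPentagonLabel v u B a p n) :
    m = n := by
  obtain ⟨j, q, rfl, hq, hj⟩ | ⟨⟨j, k⟩, rfl, rfl⟩ := hm <;>
    obtain ⟨l, r, rfl, hr, hl⟩ | ⟨⟨l, k'⟩, rfl, hr⟩ := hn
  · obtain rfl : p = q := hq
    obtain rfl : p = r := hr
    exact congrArg Fin.val (ha.reachable_iff.1 (hj.trans hl.symm))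
  · obtain rfl : p = q := hq
    exact absurd (hP.mem_outside_of_reachable hB hj) (hr ▸ notMem_outside l)
  · obtain rfl : _ = r := hr
    exact absurd (hP.mem_outside_of_reachable hB hl) (notMem_outside j)
  · obtain rfl := hP.v_injective (congrArg Prod.fst hr)
    obtain rfl := hP.pentagonNbr_injective j (congrArg Prod.snd hr)
    rfl

theorem eq_of_sameClass (hP : IsPentagon G v u) (hB : IsTransitionSystemOn G (outside v) B)
    {t : (Fin 5 ⊕ Fin 5 → Bool) × List ℕ} (ht : t ∈ (pentagonGluing π).states)
    (hcompat : ∀ k l : Fin 5, SameClass t.2 k l →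
      ArePathsCompatible B (fun j => (u j, a j true)) k l)
    {k l : ℕ} {x y z : V} (hkl : SameClass t.2 k l) (hy : HasPentagonLabel v u B a (x, y) k)
    (hz : HasPentagonLabel v u B a (x, z) l) : y = z := by
  obtain ⟨j, q, rfl, hq, hj⟩ | ⟨⟨j, k⟩, rfl, hq⟩ := hy <;>
    obtain ⟨l, r, rfl, hr, hl⟩ | ⟨⟨l, k'⟩, rfl, hr⟩ := hz
  · obtain rfl : (x, y) = q := hq
    obtain rfl : (x, z) = r := hr
    exact hcompat j l hkl hj hl
  · obtain rfl : (x, y) = q := hq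
    exact absurd (hP.mem_outside_of_reachable hB hj)
      (congrArg Prod.fst hr ▸ notMem_outside l)
  · obtain rfl : (x, z) = r := hr
    exact absurd (hP.mem_outside_of_reachable hB hl)
      (congrArg Prod.fst hq ▸ notMem_outside j)
  · obtain ⟨rfl, rfl⟩ := Prod.ext_iff.1 hq
    obtain rfl := hP.v_injective (congrArg Prod.fst hr)
    obtain rfl : k = k' := by_contra fun h => not_sameClass_innerLabel ht j h hkl
    exact (congrArg Prod.snd hr).symm

theorem isTransitionSystem_sup_links_pentagonEdges (hP : IsPentagon G v u)
    (hB : IsTransitionSystemOn G (outside v) B) (ha : IsPathLabelling G v u B a π)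
    {t : (Fin 5 ⊕ Fin 5 → Bool) × List ℕ} (ht : t ∈ (pentagonGluing π).states)
    (hcompat : ∀ k l : Fin 5, SameClass t.2 k l →
      ArePathsCompatible B (fun j => (u j, a j true)) k l) :
    IsTransitionSystem G (B ⊔ (hP.pentagonEdges ha.isSides).links t.1) := by
  refine isTransitionSystem_sup_links (lab := HasPentagonLabel v u B a) hB ht
    (hP.adj_cases ha.isSides) ?_ ?_ (hasPentagonLabel_of_adj hB) (hP.hasPentagonLabel_unique hB ha)
    (hP.eq_of_sameClass hB ht hcompat)
  · rintro (j | j) s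
    exacts [ha.hasLabel_path id _ _ j s, .inr ⟨(j, side 1 s), rfl, rfl⟩]
  · rintro (j | j) s
    exacts [.inr ⟨(j, side 2 s), rfl, rfl⟩, .inr ⟨(j + 1, side 0 s), rfl, rfl⟩]

end IsPentagon

end PentagonFibres

section Counting

theorem card_subtype_eq_sum_fiberwise {α β : Type*} [Finite α] [Fintype β] (p : α → Prop)
    (f : α → β) : Nat.card {x // p x} = ∑ b, Nat.card {x // p x ∧ f x = b} := by
  rw [← Nat.card_sigma]
  exact Nat.card_congr ((Equiv.sigmaFiberEquiv fun x : {x // p x} => f x).symm.trans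
    (Equiv.sigmaCongrRight fun b => Equiv.subtypeSubtypeEquivSubtypeInter p (f · = b)))

theorem card_le_countP {α β : Type*} {l : List β} {P : β → Prop} [DecidablePred P] {f : α → β}
    (hf : Function.Injective f) (hmem : ∀ x, f x ∈ l ∧ P (f x)) : Nat.card α ≤ l.countP P := by
  classical
  calc Nat.card α ≤ Nat.card {y // y ∈ (l.filter P).toFinset} :=
        Nat.card_le_card_of_injective (fun x => ⟨f x, by simpa using hmem x⟩)
          fun x y h => hf (congrArg Subtype.val h)
    _ = (l.filter P).toFinset.card := by rw [Nat.card_eq_fintype_card, Fintype.card_coe]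
    _ ≤ (l.filter P).length := List.toFinset_card_le _
    _ = l.countP P := List.countP_eq_length_filter.symm

theorem countP_le_card {α β : Type*} [Finite α] {l : List β} {P : β → Prop} [DecidablePred P]
    {f : β → α} {p : α → Prop} (hl : l.Nodup) (hf : Set.InjOn f {x | x ∈ l ∧ P x})
    (hmem : ∀ x ∈ l, P x → p (f x)) : l.countP P ≤ Nat.card {x // p x} := by
  classical
  calc l.countP P = (l.filter P).toFinset.card := by
        rw [List.toFinset_card_of_nodup (hl.filter _), List.countP_eq_length_filter]
    _ = Nat.card {y // y ∈ (l.filter P).toFinset} := by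
        rw [Nat.card_eq_fintype_card, Fintype.card_coe]
    _ ≤ Nat.card {x // p x} :=
        have mem_of : ∀ y : {y // y ∈ (l.filter P).toFinset}, y.1 ∈ l ∧ P y :=
          fun y => by simpa using y.2
        Nat.card_le_card_of_injective
          (fun y => ⟨f y, hmem y (mem_of y).1 (mem_of y).2⟩)
          fun y z h => Subtype.ext (hf (mem_of y) (mem_of z) (congrArg Subtype.val h))

variable {V : Type*} {G : SimpleGraph V} {v u : Fin 5 → V} {i : Fin 5} {B : SimpleGraph (V × V)}
  {a : Fin 5 → Bool → V} {π : Equiv.Perm (Fin 5)}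

namespace IsPentagon

open scoped Classical in
theorem card_reduction_fibre_le (hP : IsPentagon G v u) (hi : ¬ G.Adj (u i) (u (i + 1)))
    (ha : IsPathLabelling G v u B a π) :
    Nat.card {M // IsTransitionSystem (reduction G v u i) M ∧
      pullback (hP.toReduction i) G (outside v) M = B} ≤
      (reducedGluing π i).states.countP fun t => ∀ k l : Fin 5, SameClass t.2 k l →
        ArePathsCompatible B (fun j => (u j, a j true)) k l := by
  choose γ hγ using fun M : {M // IsTransitionSystem (reduction G v u i) M ∧
    pullback (hP.toReduction i) G (outside v) M = B} =>
      (hP.reducedEdges hi ha.isSides).exists_forall_adj M.2.1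
  choose ds hds hcompat using fun M =>
    hP.exists_mem_states_reducedGluing hi M.2.1 M.2.2 ha (hγ M)
  have le_of_eq : ∀ M M', γ M = γ M' → M.1 ≤ M'.1 := fun M M' h =>
    MarkedEdges.le_of_pullback_eq (hP.isCoveringOn_toReduction hi) M.2.1
      (hP.reduction_adj_cases hi ha.isSides) (hγ M) (h ▸ hγ M') (M.2.2.trans M'.2.2.symm)
  refine card_le_countP (f := fun M => (γ M, ds M)) (fun M M' h => ?_) fun M => ⟨hds M, hcompat M⟩
  have h := congrArg Prod.fst h
  exact Subtype.ext (le_antisymm (le_of_eq M M' h) (le_of_eq M' M h.symm))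

open scoped Classical in
theorem countP_le_card_fibre [Finite V] (hP : IsPentagon G v u)
    (hB : IsTransitionSystemOn G (outside v) B) (ha : IsPathLabelling G v u B a π) :
    ((pentagonGluing π).states.countP fun t => ∀ k l : Fin 5, SameClass t.2 k l →
      ArePathsCompatible B (fun j => (u j, a j true)) k l) ≤
      Nat.card {M // IsTransitionSystem G M ∧ pullback id G (outside v) M = B} := by
  have isTransitionSystem := fun t ht =>
    hP.isTransitionSystem_sup_links_pentagonEdges (t := t) hB ha ht
  refine countP_le_card (f := fun t => B ⊔ (hP.pentagonEdges ha.isSides).links t.1)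
    (pentagonGluing π).nodup_states ?_ ?_
  · rintro t ⟨ht, hcompat⟩ t' ⟨ht', -⟩ h
    exact (pentagonGluing π).injOn_fst_states ht ht'
      (eq_of_sup_links_eq (isTransitionSystem t ht hcompat) h)
  · intro t ht hcompat
    refine ⟨isTransitionSystem t ht hcompat, pullback_sup_links hB ?_⟩
    rintro (j | j)
    exacts [notMem_outside j, notMem_outside (j + 1)]

theorem sum_card_reduction_fibre_le [Finite V] (hP : IsPentagon G v u)
    (hnadj : ∀ i, ¬ G.Adj (u i) (u (i + 1))) (B : SimpleGraph (V × V)) :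
    ∑ i, Nat.card {M // IsTransitionSystem (reduction G v u i) M ∧
      pullback (hP.toReduction i) G (outside v) M = B} ≤
      2 * Nat.card {M // IsTransitionSystem G M ∧ pullback id G (outside v) M = B} := by
  by_cases hB : IsTransitionSystemOn G (outside v) B
  · obtain ⟨a, π, ha⟩ := hP.exists_isPathLabelling hB
    exact (Finset.sum_le_sum fun i _ => hP.card_reduction_fibre_le (hnadj i) ha).trans <|
      (sum_countP_reducedGluing_le π ha.apply_ne _).trans <|
        Nat.mul_le_mul_left 2 (hP.countP_le_card_fibre hB ha)
  · refine (Finset.sum_eq_zero fun i _ => ?_).trans_le (Nat.zero_le _)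
    have : IsEmpty {M // IsTransitionSystem (reduction G v u i) M ∧
        pullback (hP.toReduction i) G (outside v) M = B} :=
      ⟨fun M => hB (M.2.2 ▸ (hP.isCoveringOn_toReduction (hnadj i)).isTransitionSystemOn_pullback
        M.2.1)⟩
    exact Nat.card_of_isEmpty

theorem sum_nu_reduction_le [Finite V] (hP : IsPentagon G v u)
    (hnadj : ∀ i, ¬ G.Adj (u i) (u (i + 1))) : ∑ i, nu (reduction G v u i) ≤ 2 * nu G := by
  have := Fintype.ofFinite (SimpleGraph (V × V))
  calc ∑ i, nu (reduction G v u i)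
      = ∑ i, ∑ B, Nat.card {M // IsTransitionSystem (reduction G v u i) M ∧
          pullback (hP.toReduction i) G (outside v) M = B} :=
        Finset.sum_congr rfl fun i _ => by
          rw [nu_eq_card_isTransitionSystem (hP.isCubic_reduction (hnadj i)),
            card_subtype_eq_sum_fiberwise _ (pullback (hP.toReduction i) G (outside v))]
    _ = ∑ B, ∑ i, Nat.card {M // IsTransitionSystem (reduction G v u i) M ∧
          pullback (hP.toReduction i) G (outside v) M = B} := Finset.sum_comm
    _ ≤ ∑ B, 2 * Nat.card {M // IsTransitionSystem G M ∧ pullback id G (outside v) M = B} :=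
        Finset.sum_le_sum fun B _ => hP.sum_card_reduction_fibre_le hnadj B
    _ = 2 * nu G := by
        rw [← Finset.mul_sum, ← card_subtype_eq_sum_fiberwise _ (pullback id G (outside v)),
          nu_eq_card_isTransitionSystem hP.cubic]

end IsPentagon

end Counting

theorem stmt12_general {V : Type*} [Finite V] {G : SimpleGraph V} {v u : Fin 5 → V}
    (hP : IsPentagon G v u) (hnadj : ∀ i, ¬ G.Adj (u i) (u (i + 1)))
    {G' : Fin 5 → SimpleGraph ({x : V // ∀ j : Fin 5, x ≠ v j} ⊕ Unit)}
    (hG' : ∀ (i : Fin 5) p q, (G' i).Adj p q ↔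
      (∃ x y, p = Sum.inl x ∧ q = Sum.inl y ∧
        (G.Adj x.1 y.1 ∨ (x.1 = u i ∧ y.1 = u (i + 1)) ∨ (x.1 = u (i + 1) ∧ y.1 = u i))) ∨
      (∃ x, p = Sum.inl x ∧ q = Sum.inr () ∧
        (x.1 = u (i + 2) ∨ x.1 = u (i + 3) ∨ x.1 = u (i + 4))) ∨
      (∃ x, p = Sum.inr () ∧ q = Sum.inl x ∧
        (x.1 = u (i + 2) ∨ x.1 = u (i + 3) ∨ x.1 = u (i + 4)))) :
    (5 : ℚ) / 2 * ((⨅ i, nu (G' i) : ℕ) : ℚ) ≤ (nu G : ℚ) := by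
  have eq_reduction : ∀ i, G' i = reduction G v u i := fun i =>
    SimpleGraph.ext (funext₂ fun p q => propext ((hG' i p q).trans (hP.reduction_adj_iff p q).symm))
  have hsum : 5 * ⨅ i, nu (G' i) ≤ 2 * nu G := by
    calc 5 * ⨅ i, nu (G' i) = ∑ _ : Fin 5, ⨅ i, nu (G' i) := by simp
      _ ≤ ∑ i, nu (G' i) := Finset.sum_le_sum fun i _ => ciInf_le (OrderBot.bddBelow _) i
      _ = ∑ i, nu (reduction G v u i) :=
        Finset.sum_congr rfl fun i _ => congrArg nu (eq_reduction i)
      _ ≤ 2 * nu G := hP.sum_nu_reduction_le hnadj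
  have hsum' : (5 : ℚ) * (⨅ i, nu (G' i) : ℕ) ≤ 2 * nu G := by exact_mod_cast hsum
  linarith

/-- Reducing a 5-cycle `v₀v₁v₂v₃v₄` (indices mod 5) in a cyclically 4-edge-connected cubic
graph with no 3- or 4-cycles: for each `i`, the graph `G' i` is obtained by deleting the
cycle, adding a new vertex `w` adjacent to `u (i+2), u (i+3), u (i+4)` and adding the edge
`u i — u (i+1)`, where `u j` is the third neighbor of `v j`. Then
`ν(G) ≥ (5/2) · min_i ν(G' i)`. -/
theorem stmt12 {V : Type*} [Fintype V] (G : SimpleGraph V)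
    (hcyc : CyclicallyFourEdgeConnected G) (hcubic : IsCubic G)
    (hC3 : ∀ a b c : V, ¬(G.Adj a b ∧ G.Adj b c ∧ G.Adj c a))
    (hC4 : ∀ a b c d : V, a ≠ c → b ≠ d →
      ¬(G.Adj a b ∧ G.Adj b c ∧ G.Adj c d ∧ G.Adj d a))
    (v u : Fin 5 → V)
    (hvinj : Function.Injective v)
    (hcycle : ∀ i : Fin 5, G.Adj (v i) (v (i + 1)))
    (huadj : ∀ i : Fin 5, G.Adj (v i) (u i))
    (huinj : Function.Injective u)
    (huv : ∀ i j : Fin 5, u i ≠ v j)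
    (G' : Fin 5 → SimpleGraph ({x : V // ∀ j : Fin 5, x ≠ v j} ⊕ Unit))
    (hG' : ∀ (i : Fin 5) p q, (G' i).Adj p q ↔
      (∃ x y, p = Sum.inl x ∧ q = Sum.inl y ∧
        (G.Adj x.1 y.1 ∨ (x.1 = u i ∧ y.1 = u (i + 1)) ∨ (x.1 = u (i + 1) ∧ y.1 = u i))) ∨
      (∃ x, p = Sum.inl x ∧ q = Sum.inr () ∧
        (x.1 = u (i + 2) ∨ x.1 = u (i + 3) ∨ x.1 = u (i + 4))) ∨
      (∃ x, p = Sum.inr () ∧ q = Sum.inl x ∧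
        (x.1 = u (i + 2) ∨ x.1 = u (i + 3) ∨ x.1 = u (i + 4)))) :
    (5 : ℚ) / 2 * ((⨅ i, nu (G' i) : ℕ) : ℚ) ≤ (nu G : ℚ) :=
  stmt12_general ⟨hcubic, hvinj, hcycle, huadj, huinj, huv⟩ (fun i hadj =>
    hC4 (u i) (v i) (v (i + 1)) (u (i + 1)) (huv _ _) (huv _ _).symm
      ⟨(huadj i).symm, hcycle i, huadj _, hadj.symm⟩) hG'

end CiDC
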